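/- If (32, 12)_ℕ is a universal pair over the natural numbers, then (11, 950817549694171759711025515571236610412597656252821888)_ℤ is a universal pair over the integers. -/

import Mathlib

/-!
A zero in natural numbers of a polynomial `P` of degree at most `12` in `ν` unknowns is turned into
an integer zero of a polynomial in `11` unknowns, whose degree is bounded by an explicit multiple of
`13 ^ (ν + 2)`; for `ν = 32` the result lies below the required degree. Following Matiyasevich,
Robinson, Jones and Sun, this takes three steps.

*Coding.* Let `b` be a power of two exceeding the parameter `a` and all unknowns, `H = 2 ^ κ * b ^ δ`
and `Q = 2 * H`. The unknowns are stored as digits of one number `c = G + g` in base `Q`, at the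
places `(δ + 1) ^ (i + 1)`. The places are so sparse that in the product of `(1 + a * Q + c) ^ δ`
with a fixed code of `P` the digit at place `(δ + 1) ^ (ν + 2)` is `δ!` times the value of `P`
(`coding_dvd_iff`). That `c` is such a code, and that this digit vanishes, are both statements about
the disjointness of the binary digits of two numbers, and Kummer's theorem makes them one
divisibility `Y ∣ (2 * X).choose X`, where `X` and `Y` are polynomials in `a`, `b`, `g`
(`two_pow_dvd_choose_blocks`, `cY_dvd_iff`, `exists_code`).

*Pell equations.* Write `C = y_{2X+1}(M)` and `J = y_{X+1}(L)` for solutions of two Pell equations.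
With suitable large `M` and `L` the quotient `C / J` is close to `(V + 1) ^ (2 * X) / V ^ X`, whose
integer part is congruent to `(2 * X).choose X` modulo `V` (`PellData.approx`, `binomial_quotient`).
As `Y ∣ V`, the divisibility says that a multiple `q` of `Y` lies close to `C / J`. The number `C`
is recognized by three squares `D`, `F`, `I` (`eq_yn_of_squares`), the number `J` by one square `A`,
and a power `W = 2 ^ (2 * X + 1)` by a divisibility `S ∣ T` (`yn_two_pow_dvd`). The factor `β ^ 2`
of `W` is then a power of two and serves as `b`. All inequalities that are needed, including
`2 * |g| < G`, are collected in the positivity of a single number `R`. This is `PellData.sound` and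
`PellData.complete`.

*One equation.* The numbers `D`, `F`, `I` are pairwise coprime, and coprime to
`(4 * R - 2) * v ^ 2 + 1` for a nonzero multiple `v` of their product. Hence one product `A1` is a
square for some such `v` exactly when `D`, `F`, `I` are squares and `R` is positive: for `R ≤ 0` the
last factor is negative, and for `R > 0` it is a square for some `v` because `4 * R - 2` is not.
Writing `v / (D * F * I)` as `(2 * p + 1) * (3 * q' + 1)` expresses that it does not vanish. Finally
`A1` and `A` being squares and `S ∣ T` are combined as in the relation-combining theorem of
Matiyasevich and Robinson (`PellData.eqn_sound`, `PellData.eqn_complete`).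

The eleven unknowns are `f`, `g`, `h`, `k`, `l`, `w`, `x`, `y`, `n`, `p`, `q'`; here `f` enters
through `β = 1 + (2 * a + 1) * (2 * f + 1)`, which is even, so that `β ≠ 0` already forces
`a < β ^ 2`, while Euler's theorem makes it a large power of two for some `f`.
-/

open MvPolynomial

/-- `A ⊆ ℕ` is represented, with natural-number unknowns, by the polynomial
`P ∈ ℤ[x₀, x₁, …, x_ν]`, where `x₀` is reserved for the parameter. -/
def IsDiophantineOverNWith (A : Set ℕ) {ν : ℕ} (P : MvPolynomial (Fin (ν + 1)) ℤ) : Prop :=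
  ∀ a : ℕ, a ∈ A ↔ ∃ z : Fin ν → ℕ,
    eval (Fin.cases (a : ℤ) (fun i => (z i : ℤ)) : Fin (ν + 1) → ℤ) P = 0

/-- `A ⊆ ℕ` is represented, with integer unknowns, by the polynomial
`P ∈ ℤ[x₀, x₁, …, x_ν]`, where `x₀` is reserved for the parameter. -/
def IsDiophantineOverZWith (A : Set ℕ) {ν : ℕ} (P : MvPolynomial (Fin (ν + 1)) ℤ) : Prop :=
  ∀ a : ℕ, a ∈ A ↔ ∃ z : Fin ν → ℤ,
    eval (Fin.cases (a : ℤ) z : Fin (ν + 1) → ℤ) P = 0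

/-- `A ⊆ ℕ` is Diophantine over ℕ. -/
def IsDiophantineOverN (A : Set ℕ) : Prop :=
  ∃ (ν : ℕ) (P : MvPolynomial (Fin (ν + 1)) ℤ), IsDiophantineOverNWith A P

/-- `(ν, δ)` is a universal pair over ℕ. -/
def UniversalPairN (ν δ : ℕ) : Prop :=
  ∀ A : Set ℕ, IsDiophantineOverN A →
    ∃ P : MvPolynomial (Fin (ν + 1)) ℤ, P.totalDegree ≤ δ ∧ IsDiophantineOverNWith A P

/-- `(ν, δ)` is a universal pair over ℤ. -/
def UniversalPairZ (ν δ : ℕ) : Prop :=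
  ∀ A : Set ℕ, IsDiophantineOverN A →
    ∃ P : MvPolynomial (Fin (ν + 1)) ℤ, P.totalDegree ≤ δ ∧ IsDiophantineOverZWith A P

/-- The degree bound `η(ν, δ)`. -/
def eta (ν δ : ℕ) : ℕ :=
  15616 + 233856 * δ + 233952 * δ * (2 * δ + 1) ^ (ν + 1)
    + 467712 * δ ^ 2 * (2 * δ + 1) ^ (ν + 1)

/-! ### Solutions of Pell equations -/

section PellPart

/-- A solution of the Pell equation `X ^ 2 - (a ^ 2 - 1) C ^ 2 = 1` is `± yn`. -/
theorem exists_yn_of_isSquare {a : ℕ} (a1 : 1 < a) {C : ℤ}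
    (h : IsSquare (((a : ℤ) ^ 2 - 1) * C ^ 2 + 1)) :
    ∃ j, |C| = (Pell.yn a1 j : ℤ) ∧ ((a : ℤ) ^ 2 - 1) * C ^ 2 + 1 = (Pell.xn a1 j : ℤ) ^ 2 := by
  obtain ⟨r, hr⟩ := h
  obtain ⟨n, h1, h2⟩ := Pell.eq_pell a1 (x := r.natAbs) (y := C.natAbs) (by
    refine (Pell.isPell_nat a1).1 ?_
    change (r.natAbs : ℤ) * r.natAbs - _ * (C.natAbs : ℤ) * C.natAbs = 1
    rw [Pell.dz_val, Pell.az]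
    simp only [Int.natCast_natAbs]
    have h1 := abs_mul_abs_self r
    have h2 := abs_mul_abs_self C
    nlinarith)
  refine ⟨n, ?_, ?_⟩
  · rw [← h2, Int.natCast_natAbs]
  · rw [← h1, Int.natCast_natAbs, sq_abs, hr, sq]

theorem pell_eq_int {a : ℕ} (a1 : 1 < a) (n : ℕ) :
    ((a : ℤ) ^ 2 - 1) * (Pell.yn a1 n : ℤ) ^ 2 + 1 = (Pell.xn a1 n : ℤ) ^ 2 := by
  have := Pell.pell_eqz a1 n
  rw [Pell.dz_val, Pell.az, Pell.xz, Pell.yz] at this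
  linarith

/-- Lower half of the estimate `(2 a - 1) ^ n ≤ y_{n+1}(a) ≤ (2 a) ^ n`. -/
theorem le_yn_succ {a : ℕ} (a1 : 1 < a) (n : ℕ) :
    (2 * (a : ℤ) - 1) ^ n ≤ Pell.yn a1 (n + 1) := by
  induction n with
  | zero => simp
  | succ n ih =>
    have h := Pell.yn_succ_succ a1 n
    have h2 : Pell.yn a1 n ≤ Pell.yn a1 (n + 1) := (Pell.strictMono_y a1).monotone (Nat.le_succ n)
    zify at h h2
    have : (1 : ℤ) < a := by exact_mod_cast a1
    rw [pow_succ]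
    nlinarith

theorem yn_succ_le {a : ℕ} (a1 : 1 < a) (n : ℕ) :
    (Pell.yn a1 (n + 1) : ℤ) ≤ (2 * (a : ℤ)) ^ n := by
  induction n with
  | zero => simp
  | succ n ih =>
    have h := Pell.yn_succ_succ a1 n
    zify at h
    have : (1 : ℤ) < a := by exact_mod_cast a1
    have h3 : (0 : ℤ) ≤ Pell.yn a1 n := by positivity
    rw [pow_succ]
    nlinarith

theorem two_mul_lt_yn {a : ℕ} (a1 : 1 < a) (ha : 3 ≤ a) {n : ℕ} (hn : 2 ≤ n) :
    2 * n < Pell.yn a1 n := by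
  induction n, hn using Nat.le_induction with
  | base =>
    have := Pell.yn_succ_succ a1 0
    simp only [Pell.yn_zero, zero_add, Pell.yn_one] at this
    omega
  | succ n hn ih =>
    have := Pell.yn_succ a1 n
    have h2 := Pell.x_pos a1 n
    nlinarith

theorem yn_modEq_int {a : ℕ} (a1 : 1 < a) (n : ℕ) :
    (Pell.yn a1 n : ℤ) ≡ n [ZMOD (a : ℤ) - 1] := by
  have := Pell.yn_modEq_a_sub_one a1 n
  have h := (Int.natCast_modEq_iff).2 this
  rwa [Nat.cast_sub a1.le, Nat.cast_one] at h

/-- If `y_i ≡ ± y_j` modulo `x_n` then `i ≡ ± j` modulo `n`. -/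
theorem index_of_yn_modEq {a : ℕ} (a1 : 1 < a) {i j n : ℕ} (hj : j < n)
    (h : (Pell.xn a1 n : ℤ) ∣ Pell.yn a1 i - Pell.yn a1 j ∨
      (Pell.xn a1 n : ℤ) ∣ Pell.yn a1 i + Pell.yn a1 j) :
    (n : ℤ) ∣ i - j ∨ (n : ℤ) ∣ i + j := by
  have hsub := Pell.xz_sub a1 hj.le
  have hadd : (Pell.xn a1 (n + i) : ℤ) = _ := congrArg (Nat.cast (R := ℤ)) (Pell.xn_add a1 n i)
  push_cast at hadd
  simp only [Pell.xz, Pell.yz] at hsub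
  rw [Pell.dz_val, Pell.az] at hsub hadd
  have h3 : (Pell.xn a1 n : ℤ) ∣ (Pell.xn a1 (2 * n + (n + i)) : ℤ) + Pell.xn a1 (n + i) := by
    have := Pell.xn_modEq_x2n_add a1 n (n + i)
    exact_mod_cast (Nat.modEq_zero_iff_dvd.1 this)
  have key : ∃ k : ℕ, (k = n + i ∨ k = 3 * n + i) ∧
      Pell.xn a1 k ≡ Pell.xn a1 (n - j) [MOD Pell.xn a1 n] := by
    rcases h with h | h
    · refine ⟨3 * n + i, Or.inr rfl, ?_⟩
      rw [← Int.natCast_modEq_iff, Int.modEq_comm, Int.modEq_iff_dvd]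
      rw [show 3 * n + i = 2 * n + (n + i) by ring, hsub]
      have e : (Pell.xn a1 (2 * n + (n + i)) : ℤ) -
          (Pell.xn a1 n * Pell.xn a1 j - ((a : ℤ) * a - 1) * Pell.yn a1 n * Pell.yn a1 j) =
          ((Pell.xn a1 (2 * n + (n + i)) : ℤ) + Pell.xn a1 (n + i))
          - Pell.xn a1 n * (Pell.xn a1 j + Pell.xn a1 i)
          - ((a : ℤ) * a - 1) * Pell.yn a1 n * (Pell.yn a1 i - Pell.yn a1 j) := by
        rw [hadd]; ring
      rw [e]
      exact dvd_sub (dvd_sub h3 (dvd_mul_right _ _)) (Dvd.dvd.mul_left h _)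
    · refine ⟨n + i, Or.inl rfl, ?_⟩
      rw [← Int.natCast_modEq_iff, Int.modEq_comm, Int.modEq_iff_dvd, hsub]
      have e : (Pell.xn a1 (n + i) : ℤ) -
          (Pell.xn a1 n * Pell.xn a1 j - ((a : ℤ) * a - 1) * Pell.yn a1 n * Pell.yn a1 j) =
          Pell.xn a1 n * (Pell.xn a1 i - Pell.xn a1 j)
          + ((a : ℤ) * a - 1) * Pell.yn a1 n * (Pell.yn a1 i + Pell.yn a1 j) := by
        rw [hadd]; ring
      rw [e]
      exact dvd_add (dvd_mul_right _ _) (Dvd.dvd.mul_left h _)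
  obtain ⟨k, hk, hmod⟩ := key
  have hn4 : (n : ℤ) ∣ ((4 * n : ℕ) : ℤ) := ⟨4, by push_cast; ring⟩
  rcases Pell.modEq_of_xn_modEq a1 (by omega) (Nat.sub_le n j) hmod with h1 | h1
  · right
    have h2 := Int.modEq_iff_dvd.1 ((Int.natCast_modEq_iff).2 h1).symm
    have h4 := hn4.trans h2
    rw [Nat.cast_sub hj.le] at h4
    rcases hk with rfl | rfl
    · push_cast at h4
      have : (i : ℤ) + j = (n + i - (n - j)) := by ring
      rwa [this]
    · push_cast at h4
      have : (i : ℤ) + j = (3 * n + i - (n - j)) - n * 2 := by ring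
      rw [this]; exact dvd_sub h4 (dvd_mul_right _ _)
  · left
    have h2 := Int.modEq_iff_dvd.1 ((Int.natCast_modEq_iff).2 h1).symm
    have h4 := hn4.trans h2
    push_cast [Nat.cast_sub hj.le] at h4
    rcases hk with rfl | rfl
    · push_cast at h4
      have : (i : ℤ) - j = (n + i + (n - j) - 0) - n * 2 := by ring
      rw [this]; exact dvd_sub h4 (dvd_mul_right _ _)
    · push_cast at h4
      have : (i : ℤ) - j = (3 * n + i + (n - j) - 0) - n * 4 := by ring
      rw [this]; exact dvd_sub h4 (dvd_mul_right _ _)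

/-- Three Pell equations pin down the value `C = yn B`. -/
theorem eq_yn_of_squares {a : ℕ} (a1 : 1 < a) {B : ℕ} (hB : 2 ≤ B) (hBa : 3 * B + 2 ≤ a)
    {C E F G H : ℤ} (hC : C ≡ B [ZMOD (a : ℤ) - 1])
    (hE : E ≠ 0) (hCE : C ^ 2 ∣ E) (hF : F = ((a : ℤ) ^ 2 - 1) * E ^ 2 + 1)
    (hG : G = 1 + ((a : ℤ) - 1) * (F - 1) ^ 2)
    (hHF : F ∣ H - C) (hHC : C ∣ H - B)
    (sD : IsSquare (((a : ℤ) ^ 2 - 1) * C ^ 2 + 1)) (sF : IsSquare F)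
    (sI : IsSquare ((G ^ 2 - 1) * H ^ 2 + 1)) :
    C = Pell.yn a1 B := by
  obtain ⟨j, hj, -⟩ := exists_yn_of_isSquare a1 sD
  obtain ⟨n, hn, hxn⟩ := exists_yn_of_isSquare a1 (C := E) (hF ▸ sF)
  have ha : (1 : ℤ) < a := by exact_mod_cast a1
  have ha2 : (1 : ℤ) ≤ (a : ℤ) ^ 2 - 1 := by nlinarith
  have hE2 : 1 ≤ E ^ 2 := by have := sq_pos_of_ne_zero hE; omega
  have hFpos : 1 ≤ F - 1 := by rw [hF]; nlinarith
  have hG1 : 1 < G := by rw [hG]; nlinarith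
  -- `C ≡ B` modulo `a - 1` determines the index `j` of `C`, unless `j` is large; in any case
  -- `B ≤ j`.
  have hjy := yn_modEq_int a1 j
  have hjB : (j : ℤ) = B ∧ C = Pell.yn a1 j ∨ (a : ℤ) - 1 - B ≤ j := by
    rcases abs_cases C with ⟨h1, -⟩ | ⟨h1, -⟩
    · rw [h1] at hj
      rw [← hj] at hjy
      have h2 : (a : ℤ) - 1 ∣ (j : ℤ) - B := (Int.modEq_iff_dvd.1 (hC.symm.trans hjy))
      by_cases h3 : (j : ℤ) - B = 0
      · left; exact ⟨by linarith, hj⟩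
      · right
        have h4 := Int.le_of_dvd (abs_pos.2 h3) ((dvd_abs _ _).2 h2)
        rcases abs_cases ((j : ℤ) - B) with ⟨h5, _⟩ | ⟨h5, _⟩ <;> rw [h5] at h4
        · linarith
        · have : (3 * B + 2 : ℤ) ≤ a := by exact_mod_cast hBa
          linarith
    · rw [h1] at hj
      rw [← hj] at hjy
      have h2 : (a : ℤ) - 1 ∣ (j : ℤ) + B := by
        have := Int.modEq_iff_dvd.1 (hC.symm.neg.trans hjy)
        simpa using this
      right
      have := Int.le_of_dvd (by positivity) h2
      linarith
  have hBa' : (3 * B + 2 : ℤ) ≤ a := by exact_mod_cast hBa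
  have hjge : B ≤ j := by
    rcases hjB with ⟨h, -⟩ | h
    · exact_mod_cast h.symm.le
    · have : (B : ℤ) ≤ j := by linarith
      exact_mod_cast this
  have hlt : 2 * j < Pell.yn a1 j := two_mul_lt_yn a1 (by omega) (by omega)
  -- `y_j ^ 2 ∣ y_n` implies `y_j ∣ n`, so congruences modulo `n` hold modulo `C`.
  have hn0 : 0 < n := by
    rcases Nat.eq_zero_or_pos n with h | h
    · rw [h, Pell.yn_zero] at hn; exact absurd (abs_eq_zero.1 (by simpa using hn)) hE
    · exact h
  have hCn : Pell.yn a1 j ∣ n := by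
    apply Pell.dvd_of_ysq_dvd a1
    have : |C| ^ 2 ∣ |E| := by rw [sq_abs]; exact (dvd_abs _ _).2 hCE
    rw [hj, hn, sq] at this
    exact_mod_cast this
  have hjn : j < n := by have := Nat.le_of_dvd hn0 hCn; omega
  -- `H` is `y_i(G)` up to sign. Modulo `x_n` it is `± y_i(a)`, so `C ≡ H` relates `i` to `j`; modulo
  -- `C ∣ G - 1` it is `± i`, so `H ≡ B` relates `i` to `B`. Together `j ≡ ± B` modulo `C`.
  lift G to ℕ using by linarith
  have g1 : 1 < G := by exact_mod_cast hG1
  obtain ⟨i, hi, -⟩ := exists_yn_of_isSquare g1 sI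
  have hxF : (Pell.xn a1 n : ℤ) ∣ F := by rw [hF, hxn]; exact dvd_pow_self _ two_ne_zero
  have hGa : G ≡ a [MOD Pell.xn a1 n] := by
    rw [← Int.natCast_modEq_iff, Int.modEq_comm, Int.modEq_iff_dvd, hG]
    refine hxF.trans ⟨((a : ℤ) - 1) * (F - 2), by ring⟩
  have hyi : (Pell.xn a1 n : ℤ) ∣ Pell.yn g1 i - Pell.yn a1 i := by
    have := (Pell.xy_modEq_of_modEq g1 a1 hGa i).2
    exact Int.modEq_iff_dvd.1 ((Int.natCast_modEq_iff).2 this).symm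
  have hind := index_of_yn_modEq a1 (i := i) hjn (by
    have hHC' := hxF.trans hHF
    rw [← hi] at hyi
    rcases abs_cases H with ⟨h1, -⟩ | ⟨h1, -⟩ <;> rcases abs_cases C with ⟨h2, -⟩ | ⟨h2, -⟩ <;>
      rw [h1] at hyi <;> rw [h2] at hj <;> rw [← hj]
    · left; have := dvd_sub hHC' hyi; ring_nf at this ⊢; exact this
    · right; have := dvd_sub hHC' hyi; ring_nf at this ⊢; exact this
    · right; have := dvd_add hHC' hyi; rw [← dvd_neg]; ring_nf at this ⊢; exact this
    · left; have := dvd_add hHC' hyi; rw [← dvd_neg]; ring_nf at this ⊢; exact this)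
  have hCF : C ∣ F - 1 := by
    rw [hF]; exact ((dvd_pow_self C two_ne_zero).trans hCE).trans ⟨((a : ℤ) ^ 2 - 1) * E, by ring⟩
  have hiG : C ∣ |H| - i := by
    rw [hi]
    have := Int.modEq_iff_dvd.1 (yn_modEq_int g1 i).symm
    refine dvd_trans ?_ this
    rw [hG]
    exact hCF.trans ⟨((a : ℤ) - 1) * (F - 1), by ring⟩
  have hiB : C ∣ (i : ℤ) - B ∨ C ∣ (i : ℤ) + B := by
    rcases abs_cases H with ⟨h1, -⟩ | ⟨h1, -⟩ <;> rw [h1] at hiG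
    · left; have := dvd_sub hHC hiG; ring_nf at this ⊢; exact this
    · right; have := dvd_add hHC hiG; rw [← dvd_neg]; ring_nf at this ⊢; exact this
  have hCn' : C ∣ (n : ℤ) := by
    have : |C| ∣ (n : ℤ) := by rw [hj]; exact_mod_cast hCn
    exact (abs_dvd _ _).1 this
  have hfin : C ∣ (j : ℤ) - B ∨ C ∣ (j : ℤ) + B := by
    rcases hind with h1 | h1 <;> have h1' := hCn'.trans h1 <;> rcases hiB with h2 | h2
    · left; have := dvd_sub h2 h1'; ring_nf at this ⊢; exact this
    · right; have := dvd_sub h2 h1'; ring_nf at this ⊢; exact this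
    · right; have := dvd_sub h1' h2; ring_nf at this ⊢; exact this
    · left; have := dvd_sub h1' h2; ring_nf at this ⊢; exact this
  -- `0 < B ≤ j` and `2 * j < |C|` turn the congruence into an equality.
  have hlt' : (2 * j : ℤ) < |C| := by rw [hj]; exact_mod_cast hlt
  have hjge' : (B : ℤ) ≤ j := by exact_mod_cast hjge
  have hB' : (2 : ℤ) ≤ B := by exact_mod_cast hB
  have hjeq : (j : ℤ) = B := by
    rcases hfin with h | h
    · have := Int.eq_zero_of_abs_lt_dvd ((abs_dvd _ _).2 h) (by rw [abs_lt]; constructor <;> linarith)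
      linarith
    · have := Int.eq_zero_of_abs_lt_dvd ((abs_dvd _ _).2 h) (by rw [abs_lt]; constructor <;> linarith)
      linarith
  rcases hjB with ⟨-, h⟩ | h
  · rw [h, show j = B by exact_mod_cast hjeq]
  · linarith

end PellPart

/-! ### Binary digits and central binomial coefficients -/

section BitPart

/-- The number of ones in the binary expansion of `n`. -/
def pop (n : ℕ) : ℕ := (Nat.digits 2 n).sum

theorem pop_zero : pop 0 = 0 := by simp [pop]

theorem pop_two_mul_add (n : ℕ) {i : ℕ} (hi : i < 2) : pop (2 * n + i) = pop n + i := by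
  rcases Nat.eq_zero_or_pos (2 * n + i) with h | h
  · obtain ⟨rfl, rfl⟩ : n = 0 ∧ i = 0 := by omega
    simp [pop]
  · unfold pop
    rw [Nat.digits_def' (by norm_num) h, List.sum_cons]
    rw [show (2 * n + i) % 2 = i by omega, show (2 * n + i) / 2 = n by omega, add_comm]

theorem pop_two_mul (n : ℕ) : pop (2 * n) = pop n := pop_two_mul_add n (i := 0) (by norm_num)

theorem pop_add_two_pow_mul (k : ℕ) : ∀ {x : ℕ} (y : ℕ), x < 2 ^ k →
    pop (x + 2 ^ k * y) = pop x + pop y := by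
  induction k with
  | zero => intro x y hx; obtain rfl : x = 0 := by simpa using hx
            simp [pop_zero]
  | succ k ih =>
    intro x y hx
    obtain ⟨x', i, hi, rfl⟩ : ∃ x' i, i < 2 ∧ x = 2 * x' + i :=
      ⟨x / 2, x % 2, Nat.mod_lt _ (by norm_num), by omega⟩
    have hx' : x' < 2 ^ k := by rw [pow_succ] at hx; omega
    have e : 2 * x' + i + 2 ^ (k + 1) * y = 2 * (x' + 2 ^ k * y) + i := by ring
    rw [e, pop_two_mul_add _ hi, pop_two_mul_add _ hi, ih y hx']
    ring

theorem pop_compl (k : ℕ) : ∀ {x : ℕ}, x < 2 ^ k → pop (2 ^ k - 1 - x) + pop x = k := by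
  induction k with
  | zero => intro x hx; obtain rfl : x = 0 := by simpa using hx
            simp [pop_zero]
  | succ k ih =>
    intro x hx
    obtain ⟨x', i, hi, rfl⟩ : ∃ x' i, i < 2 ∧ x = 2 * x' + i :=
      ⟨x / 2, x % 2, Nat.mod_lt _ (by norm_num), by omega⟩
    rw [pow_succ] at hx ⊢
    have hx' : x' < 2 ^ k := by omega
    have e : 2 ^ k * 2 - 1 - (2 * x' + i) = 2 * (2 ^ k - 1 - x') + (1 - i) := by omega
    rw [e, pop_two_mul_add _ hi, pop_two_mul_add _ (by omega)]
    have := ih hx'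
    omega

theorem pop_succ_le (n : ℕ) : pop (n + 1) ≤ pop n + 1 := by
  induction n using Nat.strong_induction_on with
  | _ n ih =>
    obtain ⟨m, rfl | rfl⟩ : ∃ m, n = 2 * m ∨ n = 2 * m + 1 := ⟨n / 2, by omega⟩
    · rw [pop_two_mul_add m (by norm_num), pop_two_mul]
    · rw [show 2 * m + 1 + 1 = 2 * (m + 1) by ring, pop_two_mul, pop_two_mul_add m (by norm_num)]
      have := ih m (by omega)
      omega

theorem land_two_mul_add (s t : ℕ) {i j : ℕ} (hi : i < 2) (hj : j < 2) :
    (2 * s + i) &&& (2 * t + j) = 2 * (s &&& t) + i * j := by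
  apply Nat.eq_of_testBit_eq
  intro k
  rcases k with _ | k
  · simp only [Nat.testBit_zero]
    interval_cases i <;> interval_cases j <;> simp
  · rw [Nat.testBit_and, Nat.testBit_succ, Nat.testBit_succ, Nat.testBit_succ]
    have h : i * j < 2 := by interval_cases i <;> interval_cases j <;> norm_num
    rw [show (2 * s + i) / 2 = s by omega, show (2 * t + j) / 2 = t by omega,
      show (2 * (s &&& t) + i * j) / 2 = s &&& t by omega, Nat.testBit_and]

/-- Binary addition only loses ones through carries. -/
theorem pop_add (s : ℕ) : ∀ t, pop (s + t) ≤ pop s + pop t ∧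
    (pop (s + t) = pop s + pop t ↔ s &&& t = 0) := by
  induction s using Nat.strong_induction_on with
  | _ s ih =>
    intro t
    rcases Nat.eq_zero_or_pos s with rfl | hs
    · simp [pop_zero]
    obtain ⟨s', i, hi, rfl⟩ : ∃ x' i, i < 2 ∧ s = 2 * x' + i :=
      ⟨s / 2, s % 2, Nat.mod_lt _ (by norm_num), by omega⟩
    obtain ⟨t', j, hj, rfl⟩ : ∃ x' i, i < 2 ∧ t = 2 * x' + i :=
      ⟨t / 2, t % 2, Nat.mod_lt _ (by norm_num), by omega⟩
    obtain ⟨h1, h2⟩ := ih s' (by omega) t'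
    rw [land_two_mul_add _ _ hi hj, pop_two_mul_add _ hi, pop_two_mul_add _ hj]
    by_cases h : i = 1 ∧ j = 1
    · obtain ⟨rfl, rfl⟩ := h
      rw [show 2 * s' + 1 + (2 * t' + 1) = 2 * (s' + t' + 1) by ring, pop_two_mul]
      have := pop_succ_le (s' + t')
      omega
    · have hij : i * j = 0 := by interval_cases i <;> interval_cases j <;> simp_all
      rw [show 2 * s' + i + (2 * t' + j) = 2 * (s' + t') + (i + j) by ring,
        pop_two_mul_add _ (by omega), hij]
      omega

/-- Kummer's theorem for the prime `2`, in the form due to Legendre. -/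
theorem padicValNat_choose_two_mul (X : ℕ) : padicValNat 2 ((2 * X).choose X) = pop X := by
  have h := sub_one_mul_padicValNat_choose_eq_sub_sum_digits (p := 2) (k := X) (n := 2 * X)
    (by omega)
  have h2 := pop_two_mul X
  unfold pop at *
  rw [show 2 * X - X = X by omega, h2] at h
  omega

/-- A concatenation of blocks of binary digits whose digit sum measures the carries in the sums
`S₁ + T₁` and `S₂ + T₂`. The blocks are digits in base `2 * Z`, with `Z` a power of two above all
entries: the sum `S₁ + T₁` has as many ones as `S₁` and `T₁` together exactly when nothing is
carried, and the complements bring in the ones of `S₁` and `T₁`. -/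
def blocks {R : Type*} [CommRing R] (Z S₁ T₁ S₂ T₂ : R) : R :=
  (S₁ + T₁) + 2 * Z * ((Z - 1 - S₁) + 2 * Z * ((Z - 1 - T₁) +
    2 * Z * ((S₂ + T₂) + 2 * Z * ((Z - 1 - S₂) + 2 * Z * (Z - 1 - T₂)))))

theorem blocks_cast {k S₁ T₁ S₂ T₂ : ℕ} (h₁ : S₁ < 2 ^ k) (h₂ : T₁ < 2 ^ k)
    (h₃ : S₂ < 2 ^ k) (h₄ : T₂ < 2 ^ k) :
    blocks ((2 : ℤ) ^ k) S₁ T₁ S₂ T₂ = (((S₁ + T₁) + 2 ^ (k + 1) * ((2 ^ k - 1 - S₁) +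
      2 ^ (k + 1) * ((2 ^ k - 1 - T₁) + 2 ^ (k + 1) * ((S₂ + T₂) + 2 ^ (k + 1) *
      ((2 ^ k - 1 - S₂) + 2 ^ (k + 1) * (2 ^ k - 1 - T₂))))) : ℕ) : ℤ) := by
  have e : ∀ x : ℕ, x < 2 ^ k → ((2 ^ k - 1 - x : ℕ) : ℤ) = (2 : ℤ) ^ k - 1 - x := by
    intro x hx
    rw [Nat.sub_sub, Nat.cast_sub (by omega)]
    push_cast; ring
  push_cast [e _ h₁, e _ h₂, e _ h₃, e _ h₄]
  unfold blocks
  ring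

/-- Kummer's theorem turns two bitwise disjointness conditions into one divisibility of a central
binomial coefficient. -/
theorem two_pow_dvd_choose_blocks {k S₁ T₁ S₂ T₂ X : ℕ} (h₁ : S₁ < 2 ^ k) (h₂ : T₁ < 2 ^ k)
    (h₃ : S₂ < 2 ^ k) (h₄ : T₂ < 2 ^ k) (hX : (X : ℤ) = blocks ((2 : ℤ) ^ k) S₁ T₁ S₂ T₂) :
    2 ^ (4 * k) ∣ (2 * X).choose X ↔ S₁ &&& T₁ = 0 ∧ S₂ &&& T₂ = 0 := by
  rw [blocks_cast h₁ h₂ h₃ h₄, Nat.cast_inj] at hX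
  rw [padicValNat_dvd_iff_le (Nat.choose_pos (by omega)).ne', padicValNat_choose_two_mul, hX]
  have p : 2 ^ (k + 1) = 2 * 2 ^ k := by ring
  rw [pop_add_two_pow_mul _ _ (by omega), pop_add_two_pow_mul _ _ (by omega),
    pop_add_two_pow_mul _ _ (by omega), pop_add_two_pow_mul _ _ (by omega),
    pop_add_two_pow_mul _ _ (by omega)]
  have c1 := pop_compl k h₁
  have c2 := pop_compl k h₂
  have c3 := pop_compl k h₃
  have c4 := pop_compl k h₄
  obtain ⟨a1, a2⟩ := pop_add S₁ T₁
  obtain ⟨b1, b2⟩ := pop_add S₂ T₂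
  rw [← a2, ← b2]
  omega

/-- The binary ones of `x` occur among those of `y`. -/
def BSub (x y : ℕ) : Prop := ∀ i, x.testBit i = true → y.testBit i = true

/-- Disjointness from the complement of `C` is bitwise containment in `C`. -/
theorem land_compl_eq_zero_iff {k S C : ℕ} (hS : S < 2 ^ k) (hC : C < 2 ^ k) :
    S &&& (2 ^ k - 1 - C) = 0 ↔ BSub S C := by
  rw [Nat.sub_sub, add_comm 1 C]
  constructor
  · intro h i hi
    have h2 : (S &&& (2 ^ k - (C + 1))).testBit i = false := by rw [h]; simp
    rw [Nat.testBit_and, Nat.testBit_two_pow_sub_succ hC, hi] at h2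
    have hik : i < k := by
      by_contra hcon
      have := Nat.testBit_lt_two_pow (hS.trans_le (Nat.pow_le_pow_right (by norm_num) (not_lt.1 hcon)))
      rw [this] at hi; exact absurd hi (by simp)
    simpa [hik] using h2
  · intro h
    apply Nat.eq_of_testBit_eq
    intro i
    rw [Nat.testBit_and, Nat.testBit_two_pow_sub_succ hC, Nat.zero_testBit]
    by_cases hi : S.testBit i = true
    · simp [h i hi]
    · simp [hi]

theorem bSub_add_two_pow_mul {k x y : ℕ} (u w : ℕ) (hx : x < 2 ^ k) (hy : y < 2 ^ k) :
    BSub (x + 2 ^ k * u) (y + 2 ^ k * w) ↔ BSub x y ∧ BSub u w := by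
  unfold BSub
  simp only [add_comm x, add_comm y, Nat.testBit_two_pow_mul_add _ hx,
    Nat.testBit_two_pow_mul_add _ hy]
  constructor
  · intro h
    constructor
    · intro i hi
      have hik : i < k := by
        by_contra hcon
        have := Nat.testBit_lt_two_pow
          (hx.trans_le (Nat.pow_le_pow_right (by norm_num) (not_lt.1 hcon)))
        rw [this] at hi; exact absurd hi (by simp)
      have := h i
      simp only [hik, if_true] at this
      exact this hi
    · intro i hi
      have := h (i + k)
      simp only [show ¬ (i + k < k) by omega, if_false, Nat.add_sub_cancel] at this
      exact this hi
  · rintro ⟨h1, h2⟩ i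
    split_ifs
    · exact h1 i
    · exact h2 _

theorem bSub_two_pow_sub_one {m u : ℕ} : BSub u (2 ^ m - 1) ↔ u < 2 ^ m := by
  constructor
  · intro h
    apply Nat.lt_pow_two_of_testBit
    intro i hi
    by_contra hcon
    have := h i (by simpa using hcon)
    rw [Nat.testBit_two_pow_sub_one] at this
    simp at this
    omega
  · intro h i hi
    rw [Nat.testBit_two_pow_sub_one]
    by_contra hcon
    have hik : m ≤ i := by simpa using hcon
    have := Nat.testBit_lt_two_pow (h.trans_le (Nat.pow_le_pow_right (by norm_num) hik))
    rw [this] at hi; exact absurd hi (by simp)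

theorem sum_digits_lt {B : ℕ} {e v : ℕ → ℕ} (he : StrictMono e) (hv : ∀ i, v i < B) (r : ℕ) :
    ∑ i ∈ Finset.range r, v i * B ^ e i < B ^ e r := by
  have hB : 0 < B := (Nat.zero_le _).trans_lt (hv 0)
  induction r with
  | zero => simp [hB]
  | succ r ih =>
    rw [Finset.sum_range_succ]
    calc _ < B ^ e r + v r * B ^ e r := by omega
      _ = (v r + 1) * B ^ e r := by ring
      _ ≤ B * B ^ e r := Nat.mul_le_mul_right _ (hv r)
      _ = B ^ (e r + 1) := by ring
      _ ≤ _ := Nat.pow_le_pow_right hB (he (Nat.lt_succ_self r))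

/-- The sparse numbers with base-`2 ^ s` digits below `2 ^ m` at the places `e i` are exactly those
bitwise contained in the largest such number. -/
theorem bSub_mask_iff {m s : ℕ} (hms : m ≤ s) {e : ℕ → ℕ} (he : StrictMono e) (r : ℕ) :
    ∀ x, BSub x (∑ i ∈ Finset.range r, (2 ^ m - 1) * (2 ^ s) ^ e i) ↔
      ∃ v : ℕ → ℕ, (∀ i, v i < 2 ^ m) ∧ x = ∑ i ∈ Finset.range r, v i * (2 ^ s) ^ e i := by
  have hpm : 0 < 2 ^ m := by positivity
  have hpms : 2 ^ m ≤ 2 ^ s := Nat.pow_le_pow_right (by norm_num) hms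
  induction r with
  | zero =>
    intro x
    simp only [Finset.range_zero, Finset.sum_empty]
    constructor
    · intro h
      refine ⟨fun _ => 0, fun _ => hpm, ?_⟩
      apply Nat.eq_of_testBit_eq
      intro i
      by_contra hcon
      have := h i (by simpa using hcon)
      simp at this
    · rintro ⟨-, -, rfl⟩ i hi
      exact hi
  | succ r ih =>
    intro x
    have hpow : (2 ^ s) ^ e r = 2 ^ (s * e r) := by rw [pow_mul]
    have hmask := sum_digits_lt (B := 2 ^ s) (v := fun _ => 2 ^ m - 1) he (by intro; omega) r
    rw [hpow] at hmask
    rw [Finset.sum_range_succ]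
    rw [hpow]
    have hx : x = x % 2 ^ (s * e r) + 2 ^ (s * e r) * (x / 2 ^ (s * e r)) :=
      (Nat.mod_add_div _ _).symm
    have hmod : x % 2 ^ (s * e r) < 2 ^ (s * e r) := Nat.mod_lt _ (by positivity)
    constructor
    · intro h
      rw [hx, mul_comm (2 ^ m - 1) (2 ^ (s * e r)), bSub_add_two_pow_mul _ _ hmod hmask, ih,
        bSub_two_pow_sub_one] at h
      obtain ⟨⟨v, hv, hvx⟩, h2⟩ := h
      refine ⟨fun i => if i = r then x / 2 ^ (s * e r) else v i, ?_, ?_⟩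
      · intro i; dsimp only; split_ifs
        · exact h2
        · exact hv i
      · rw [Finset.sum_range_succ]
        simp only [if_true]
        rw [Finset.sum_congr rfl (g := fun i => v i * (2 ^ s) ^ e i), ← hvx, hpow]
        · rw [mul_comm (x / _)]; exact hx
        · intro i hi
          rw [if_neg (Finset.mem_range.1 hi).ne]
    · rintro ⟨v, hv, rfl⟩
      rw [Finset.sum_range_succ]
      have hlt := sum_digits_lt (B := 2 ^ s) (v := v) he (fun i => (hv i).trans_le hpms) r
      rw [hpow] at hlt
      rw [hpow, mul_comm (v r), mul_comm (2 ^ m - 1) (2 ^ (s * e r)), bSub_add_two_pow_mul _ _ hlt hmask,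
        ih, bSub_two_pow_sub_one]
      exact ⟨⟨v, hv, rfl⟩, hv r⟩

/-- Disjointness from a single block of ones is a divisibility property. -/
theorem land_block_eq_zero_iff (K t n : ℕ) :
    K &&& ((2 ^ t - 1) * 2 ^ n) = 0 ↔ 2 ^ t ∣ K / 2 ^ n := by
  rw [Nat.dvd_iff_mod_eq_zero]
  have : ∀ i, ((2 ^ t - 1) * 2 ^ n).testBit i = (decide (n ≤ i) && decide (i - n < t)) := by
    intro i
    rw [mul_comm, Nat.testBit_two_pow_mul, Nat.testBit_two_pow_sub_one]
  constructor
  · intro h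
    apply Nat.eq_of_testBit_eq
    intro i
    have h2 : (K &&& ((2 ^ t - 1) * 2 ^ n)).testBit (n + i) = false := by rw [h]; simp
    rw [Nat.testBit_and, this] at h2
    rw [Nat.testBit_mod_two_pow, Nat.testBit_div_two_pow, Nat.zero_testBit]
    simp at h2
    by_cases hi : i < t <;> simp [hi]
    by_contra hcon
    have := h2 (by simpa [add_comm] using hcon)
    omega
  · intro h
    apply Nat.eq_of_testBit_eq
    intro i
    rw [Nat.testBit_and, this, Nat.zero_testBit]
    have h2 : (K / 2 ^ n % 2 ^ t).testBit (i - n) = false := by rw [h]; simp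
    rw [Nat.testBit_mod_two_pow, Nat.testBit_div_two_pow] at h2
    by_cases hi : n ≤ i
    · rw [Nat.sub_add_cancel hi] at h2
      by_cases hi2 : i - n < t
      · simp [hi2] at h2; simp [h2]
      · simp [hi2]
    · simp [hi]

end BitPart

/-! ### Coding tuples by digits -/

section CodingPart

/-- Expansions in base `B` with digits below `B` are unique. -/
theorem digits_inj {B : ℕ} (r : ℕ) : ∀ {u v : ℕ → ℕ}, (∀ i, u i < B) → (∀ i, v i < B) →
    ∑ i ∈ Finset.range r, u i * B ^ i = ∑ i ∈ Finset.range r, v i * B ^ i →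
    ∀ i < r, u i = v i := by
  induction r with
  | zero => intro u v _ _ _ i hi; omega
  | succ r ih =>
    intro u v hu hv h i hi
    have key : ∀ w : ℕ → ℕ, ∑ i ∈ Finset.range (r + 1), w i * B ^ i =
        w 0 + B * ∑ i ∈ Finset.range r, w (i + 1) * B ^ i := by
      intro w
      rw [Finset.sum_range_succ', Finset.mul_sum]
      simp only [pow_zero, mul_one]
      rw [add_comm]
      congr 1
      exact Finset.sum_congr rfl fun j _ => by ring
    rw [key, key] at h
    have hB : 0 < B := (Nat.zero_le _).trans_lt (hu 0)
    have h0 : u 0 = v 0 := by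
      have := congrArg (· % B) h
      simpa [Nat.add_mul_mod_self_left, Nat.mod_eq_of_lt (hu 0), Nat.mod_eq_of_lt (hv 0)] using this
    rw [h0] at h
    have h1 := Nat.eq_of_mul_eq_mul_left hB (Nat.add_left_cancel h)
    rcases i with _ | i
    · exact h0
    · exact ih (u := fun i => u (i + 1)) (v := fun i => v (i + 1)) (fun i => hu _) (fun i => hv _)
        h1 i (by omega)

/-- The place of the `i`-th value inside the code `c`: the constant `1` sits at place `0`, the
other values at the powers of `δ + 1`. -/
def expo (δ : ℕ) : ℕ → ℕ
  | 0 => 0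
  | i + 1 => (δ + 1) ^ i

/-- The place at which the monomial with exponents `k` appears in `c ^ δ`. -/
def wt (δ r : ℕ) (k : ℕ → ℕ) : ℕ := ∑ i ∈ Finset.range (r + 1), k i * expo δ i

theorem wt_eq (δ r : ℕ) (k : ℕ → ℕ) :
    wt δ r k = ∑ i ∈ Finset.range r, k (i + 1) * (δ + 1) ^ i := by
  unfold wt
  rw [Finset.sum_range_succ']
  simp [expo]

theorem le_of_mem_piAntidiag {δ r : ℕ} {k : ℕ → ℕ}
    (hk : k ∈ Finset.piAntidiag (Finset.range r) δ) (i : ℕ) : k i ≤ δ := by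
  rw [Finset.mem_piAntidiag] at hk
  by_cases h : k i = 0
  · omega
  · rw [← hk.1]
    exact Finset.single_le_sum (f := k) (fun _ _ => Nat.zero_le _) (hk.2 i h)

theorem wt_lt {δ r : ℕ} {k : ℕ → ℕ} (hk : k ∈ Finset.piAntidiag (Finset.range (r + 1)) δ) :
    wt δ r k < (δ + 1) ^ r := by
  rw [wt_eq]
  exact sum_digits_lt (e := id) (v := fun i => k (i + 1)) strictMono_id
    (fun i => Nat.lt_succ_of_le (le_of_mem_piAntidiag hk _)) r

/-- Distinct monomials of degree `δ` appear at distinct places of `c ^ δ`: the exponents are the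
digits of the place in base `δ + 1`, except for the exponent of the homogenizing value, which is
determined by the total degree. -/
theorem wt_inj {δ r : ℕ} {k l : ℕ → ℕ} (hk : k ∈ Finset.piAntidiag (Finset.range (r + 1)) δ)
    (hl : l ∈ Finset.piAntidiag (Finset.range (r + 1)) δ) (h : wt δ r k = wt δ r l) : k = l := by
  rw [wt_eq, wt_eq] at h
  have key := digits_inj r (u := fun i => k (i + 1)) (v := fun i => l (i + 1))
    (fun i => Nat.lt_succ_of_le (le_of_mem_piAntidiag hk _))
    (fun i => Nat.lt_succ_of_le (le_of_mem_piAntidiag hl _)) h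
  rw [Finset.mem_piAntidiag] at hk hl
  have h0 : k 0 = l 0 := by
    have h1 := hk.1
    rw [← hl.1, Finset.sum_range_succ', Finset.sum_range_succ',
      Finset.sum_congr rfl fun i hi => key i (Finset.mem_range.1 hi)] at h1
    exact Nat.add_left_cancel h1
  funext i
  rcases i with _ | i
  · exact h0
  by_cases hi : i < r
  · exact key i hi
  · have z : ∀ f : ℕ → ℕ, (∀ i, f i ≠ 0 → i ∈ Finset.range (r + 1)) → f (i + 1) = 0 := by
      intro f hf
      by_contra hcon
      have := Finset.mem_range.1 (hf _ hcon)
      omega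
    rw [z _ hk.2, z _ hl.2]

/-- A sum of small signed digits, shifted by `H = B / 2` in each place, has a `n`-th digit that is
a multiple of `H` modulo `B` only when the signed digit is zero. -/
theorem dvd_shifted_digit_iff {H n r : ℕ} {co : ℕ → ℤ} (hco : ∀ j, |co j| < H) (hn : n < r)
    {K : ℕ} (hK : (K : ℤ) = ∑ j ∈ Finset.range r, (co j + H) * (2 * H : ℤ) ^ j) :
    H ∣ K / (2 * H) ^ n ↔ co n = 0 := by
  have hH : 0 < H := by
    have := (abs_nonneg _).trans_lt (hco 0); exact_mod_cast this
  set d : ℕ → ℕ := fun j => (co j + H).toNat with hd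
  have hd2 : ∀ j, (d j : ℤ) = co j + H := by
    intro j
    have := abs_lt.1 (hco j)
    exact Int.toNat_of_nonneg (by linarith)
  have hdlt : ∀ j, d j < 2 * H := by
    intro j
    have := abs_lt.1 (hco j)
    have h2 := hd2 j
    omega
  have hK2 : K = ∑ j ∈ Finset.range r, d j * (2 * H) ^ j := by
    have : (K : ℤ) = ((∑ j ∈ Finset.range r, d j * (2 * H) ^ j : ℕ) : ℤ) := by
      rw [hK]; push_cast [hd2]; rfl
    exact_mod_cast this
  have hlow := sum_digits_lt (e := id) (v := d) (B := 2 * H) strictMono_id hdlt n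
  simp only [id] at hlow
  obtain ⟨m, rfl⟩ : ∃ m, r = n + (m + 1) := ⟨r - n - 1, by omega⟩
  have hsplit : K = ∑ j ∈ Finset.range n, d j * (2 * H) ^ j +
      (2 * H) ^ n * (d n + 2 * H * ∑ j ∈ Finset.range m, d (n + (j + 1)) * (2 * H) ^ j) := by
    rw [hK2, Finset.sum_range_add, Finset.sum_range_succ', mul_add, Finset.mul_sum, Finset.mul_sum,
      add_comm (Finset.sum _ _) (d (n + 0) * _)]
    congr 2
    · rw [add_zero, mul_comm]
    · exact Finset.sum_congr rfl fun j _ => by ring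
  have hpos : 0 < (2 * H) ^ n := by positivity
  rw [hsplit, Nat.add_mul_div_left _ _ hpos, Nat.div_eq_of_lt hlow, zero_add]
  rw [mul_assoc 2 H, Nat.dvd_add_left ((Dvd.intro _ rfl : H ∣ H * _).mul_left 2)]
  have h1 : H ∣ d n ↔ (H : ℤ) ∣ co n := by
    rw [← Int.natCast_dvd_natCast, hd2]
    exact Int.dvd_add_left (dvd_refl _)
  rw [h1]
  constructor
  · intro h
    exact Int.eq_zero_of_abs_lt_dvd h (hco n)
  · intro h; rw [h]; exact dvd_zero _

/-- The coding lemma. In the product of `c ^ δ` with the code of the coefficients, the coefficient of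
`(2 * H) ^ ((δ + 1) ^ r)` is `δ!` times the value `∑ α m * ∏ v i ^ kap m i` of the encoded
polynomial. Here `kap m` runs over exponents of total degree `δ`, the factorials compensate for the
multinomial coefficients in `c ^ δ`, and `H` is added to every digit to avoid negative ones. -/
theorem coding_dvd_iff {σ : Type*} {S : Finset σ} {α : σ → ℤ} {kap : σ → ℕ → ℕ} {δ r H : ℕ}
    (hkap : ∀ m ∈ S, kap m ∈ Finset.piAntidiag (Finset.range (r + 1)) δ) {v : ℕ → ℕ}
    (hH : (∑ i ∈ Finset.range (r + 1), (v i : ℤ)) ^ δ *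
      (∑ m ∈ S, |α m * ∏ i ∈ Finset.range (r + 1), ((kap m i).factorial : ℤ)|) < H) {K : ℕ}
    (hK : (K : ℤ) = (∑ i ∈ Finset.range (r + 1), (v i : ℤ) * (2 * H : ℤ) ^ expo δ i) ^ δ *
      (∑ m ∈ S, α m * (∏ i ∈ Finset.range (r + 1), ((kap m i).factorial : ℤ)) *
        (2 * H : ℤ) ^ ((δ + 1) ^ r - wt δ r (kap m))) +
      H * ∑ j ∈ Finset.range (2 * (δ + 1) ^ r), (2 * H : ℤ) ^ j) :
    H ∣ K / (2 * H) ^ ((δ + 1) ^ r) ↔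
      ∑ m ∈ S, α m * ∏ i ∈ Finset.range (r + 1), (v i : ℤ) ^ kap m i = 0 := by
  set N := (δ + 1) ^ r with hN
  have hNpos : 0 < N := by positivity
  set s := Finset.range (r + 1)
  set A := Finset.piAntidiag s δ
  set d : σ → ℤ := fun m => α m * ∏ i ∈ s, ((kap m i).factorial : ℤ)
  set t : (ℕ → ℕ) × σ → ℤ := fun p => (Nat.multinomial s p.1 : ℤ) * (∏ i ∈ s, (v i : ℤ) ^ p.1 i) *
    d p.2
  set pl : (ℕ → ℕ) × σ → ℕ := fun p => wt δ r p.1 + (N - wt δ r (kap p.2))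
  have hpow : ∀ f : ℕ → ℤ, (∑ i ∈ s, f i) ^ δ =
      ∑ k ∈ A, (Nat.multinomial s k : ℤ) * ∏ i ∈ s, f i ^ k i := by
    intro f; exact Finset.sum_pow_eq_sum_piAntidiag s f δ
  set co : ℕ → ℤ := fun j => ∑ p ∈ (A ×ˢ S).filter (fun p => pl p = j), t p with hco
  have hbound : ∀ j, |co j| < H := by
    intro j
    refine lt_of_le_of_lt ?_ hH
    calc |co j| ≤ ∑ p ∈ (A ×ˢ S).filter (fun p => pl p = j), |t p| := Finset.abs_sum_le_sum_abs _ _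
      _ ≤ ∑ p ∈ A ×ˢ S, |t p| := Finset.sum_le_sum_of_subset_of_nonneg (Finset.filter_subset _ _)
          (fun _ _ _ => abs_nonneg _)
      _ = _ := by
        rw [hpow, Finset.sum_mul_sum, Finset.sum_product]
        refine Finset.sum_congr rfl fun k _ => Finset.sum_congr rfl fun m _ => ?_
        simp only [t, d]
        rw [abs_mul, abs_of_nonneg]
        positivity
  have hprod : (∑ i ∈ s, (v i : ℤ) * (2 * H : ℤ) ^ expo δ i) ^ δ *
      (∑ m ∈ S, α m * (∏ i ∈ s, ((kap m i).factorial : ℤ)) *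
        (2 * H : ℤ) ^ (N - wt δ r (kap m))) =
      ∑ j ∈ Finset.range (2 * N), co j * (2 * H : ℤ) ^ j := by
    rw [hpow, Finset.sum_mul_sum, ← Finset.sum_product']
    have hmem : ∀ p ∈ A ×ˢ S, pl p ∈ Finset.range (2 * N) := by
      intro p hp
      rw [Finset.mem_product] at hp
      have := wt_lt hp.1
      simp only [pl, Finset.mem_range]
      omega
    rw [← Finset.sum_fiberwise_of_maps_to hmem]
    refine Finset.sum_congr rfl fun j _ => ?_
    rw [hco, Finset.sum_mul]
    refine Finset.sum_congr rfl fun p hp => ?_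
    have hpj := (Finset.mem_filter.1 hp).2
    have e1 : ∀ Q : ℤ, ∏ i ∈ s, ((v i : ℤ) * Q ^ expo δ i) ^ p.1 i =
        (∏ i ∈ s, (v i : ℤ) ^ p.1 i) * Q ^ wt δ r p.1 := by
      intro Q
      simp only [mul_pow, Finset.prod_mul_distrib]
      congr 1
      rw [wt, ← Finset.prod_pow_eq_pow_sum]
      exact Finset.prod_congr rfl fun i _ => by rw [← pow_mul, mul_comm]
    rw [e1, ← hpj]
    simp only [t, d, pl]
    rw [pow_add]
    ring
  rw [hprod, Finset.mul_sum, ← Finset.sum_add_distrib] at hK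
  rw [dvd_shifted_digit_iff hbound (show N < 2 * N by omega) (r := 2 * N)
    (by rw [hK]; exact Finset.sum_congr rfl fun j _ => by ring)]
  have hcoN : co N = δ.factorial * ∑ m ∈ S, α m * ∏ i ∈ s, (v i : ℤ) ^ kap m i := by
    rw [Finset.mul_sum]
    symm
    refine Finset.sum_bij (fun m _ => (kap m, m)) ?_ ?_ ?_ ?_
    · intro m hm
      rw [Finset.mem_filter, Finset.mem_product]
      have := wt_lt (hkap m hm)
      exact ⟨⟨hkap m hm, hm⟩, by simp only [pl]; omega⟩
    · intro m _ m' _ h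
      exact (Prod.ext_iff.1 h).2
    · rintro ⟨k, m⟩ hp
      rw [Finset.mem_filter, Finset.mem_product] at hp
      obtain ⟨⟨hk, hm⟩, hp⟩ := hp
      refine ⟨m, hm, ?_⟩
      have h1 := wt_lt (hkap m hm)
      have h2 : wt δ r (kap m) = wt δ r k := by
        have h3 : wt δ r k + (N - wt δ r (kap m)) = N := hp
        omega
      rw [wt_inj (hkap m hm) hk h2]
    · intro m hm
      have hsp := Nat.multinomial_spec s (kap m)
      rw [(Finset.mem_piAntidiag.1 (hkap m hm)).1] at hsp
      simp only [t, d]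
      rw [← hsp]
      push_cast
      ring
  rw [hcoN, mul_eq_zero, or_iff_right]
  exact_mod_cast δ.factorial_ne_zero

end CodingPart

/-! ### From zeros of a polynomial to divisibility of a central binomial coefficient -/

section CodingTop

/-- The exponents of the homogenization of the monomial `m`: index `0` receives the missing degree
and index `i + 1` the exponent of the `i`-th variable. -/
def kap (ν δ : ℕ) (m : Fin (ν + 1) →₀ ℕ) : ℕ → ℕ
  | 0 => δ - ∑ i, m i
  | i + 1 => if h : i < ν + 1 then m ⟨i, h⟩ else 0

theorem kap_mem {ν δ : ℕ} {P : MvPolynomial (Fin (ν + 1)) ℤ} (hP : P.totalDegree ≤ δ)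
    {m : Fin (ν + 1) →₀ ℕ} (hm : m ∈ P.support) :
    kap ν δ m ∈ Finset.piAntidiag (Finset.range (ν + 2 + 1)) δ := by
  rw [Finset.mem_piAntidiag]
  have hle : ∑ i, m i ≤ δ := by
    have := (le_totalDegree hm).trans hP
    rwa [Finsupp.sum_fintype _ _ (fun _ => rfl)] at this
  constructor
  · rw [Finset.sum_range_succ', Finset.sum_range_succ, Finset.sum_range]
    simp only [kap, Fin.is_lt, dif_pos, Fin.eta, lt_irrefl, dif_neg, not_false_iff]
    omega
  · intro i hi
    rw [Finset.mem_range]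
    rcases i with _ | i
    · omega
    · by_contra hcon
      apply hi
      simp only [kap]
      rw [dif_neg (by omega)]

/-- The values entering the code: the homogenizing `1`, the parameter, the unknowns. -/
def codeVal (a : ℕ) (v : ℕ → ℕ) : ℕ → ℕ
  | 0 => 1
  | 1 => a
  | i + 2 => v i

/-- Homogenizing by the value `1` does not change the value of `P`. -/
theorem sum_kap_eq_eval {ν δ : ℕ} (P : MvPolynomial (Fin (ν + 1)) ℤ) (a : ℕ) (v : ℕ → ℕ) :
    ∑ m ∈ P.support, coeff m P * ∏ i ∈ Finset.range (ν + 2 + 1), (codeVal a v i : ℤ) ^ kap ν δ m i =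
      eval (Fin.cases (a : ℤ) (fun i : Fin ν => (v i : ℤ)) : Fin (ν + 1) → ℤ) P := by
  rw [eval_eq']
  refine Finset.sum_congr rfl fun m _ => ?_
  congr 1
  rw [Finset.prod_range_succ', Finset.prod_range_succ, Finset.prod_range]
  simp only [kap, Fin.is_lt, dif_pos, Fin.eta, lt_irrefl, dif_neg, not_false_iff, codeVal]
  simp only [Nat.cast_one, one_pow, mul_one, pow_zero]
  refine Finset.prod_congr rfl fun i _ => ?_
  refine Fin.cases ?_ (fun j => ?_) i
  · simp
  · simp

/-- Half of the base of the positional system. -/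
def cH (κ δ : ℕ) (b : ℤ) : ℤ := 2 ^ κ * b ^ δ

/-- The bound on the unknown `g`; the place value of the leading digit of the code. -/
def cG (ν δ : ℕ) (Q : ℤ) : ℤ := Q ^ (δ + 1) ^ (ν + 1)

/-- The mask of all admissible digits of the code. -/
def cComp (ν δ : ℕ) (b Q : ℤ) : ℤ := ∑ i ∈ Finset.range (ν + 1), (b - 1) * Q ^ (δ + 1) ^ (i + 1)

/-- The coefficient of the monomial `m`, normalized by the multinomial coefficient. -/
def dCoeff {ν : ℕ} (δ : ℕ) (P : MvPolynomial (Fin (ν + 1)) ℤ) (m : Fin (ν + 1) →₀ ℕ) : ℤ :=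
  coeff m P * ∏ i ∈ Finset.range (ν + 2 + 1), ((kap ν δ m i).factorial : ℤ)

/-- The code of the polynomial `P`. -/
def cD {ν : ℕ} (δ : ℕ) (P : MvPolynomial (Fin (ν + 1)) ℤ) (Q : ℤ) : ℤ :=
  ∑ m ∈ P.support, dCoeff δ P m * Q ^ ((δ + 1) ^ (ν + 2) - wt δ (ν + 2) (kap ν δ m))

/-- The product of the codes, shifted so that all digits are positive. -/
def cK {ν : ℕ} (κ δ : ℕ) (P : MvPolynomial (Fin (ν + 1)) ℤ) (a b g : ℤ) : ℤ :=
  (1 + a * (2 * cH κ δ b) + (cG ν δ (2 * cH κ δ b) + g)) ^ δ * cD δ P (2 * cH κ δ b) +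
    cH κ δ b * ∑ j ∈ Finset.range (2 * (δ + 1) ^ (ν + 2)), (2 * cH κ δ b) ^ j

/-- The block size. -/
def cZ (ν δ : ℕ) (Q : ℤ) : ℤ := Q ^ (2 * (δ + 1) ^ (ν + 2) + 2)

/-- The mask selecting the digit that carries the value of `P`. -/
def cT (κ ν δ : ℕ) (b : ℤ) : ℤ := (cH κ δ b - 1) * (2 * cH κ δ b) ^ (δ + 1) ^ (ν + 2)

/-- The number whose central binomial coefficient is tested for divisibility. -/
def cX {ν : ℕ} (κ δ : ℕ) (P : MvPolynomial (Fin (ν + 1)) ℤ) (a b g : ℤ) : ℤ :=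
  blocks (cZ ν δ (2 * cH κ δ b)) (cG ν δ (2 * cH κ δ b) + g)
    (cZ ν δ (2 * cH κ δ b) - 1 - cComp ν δ b (2 * cH κ δ b)) (cK κ δ P a b g) (cT κ ν δ b)

/-- The power of two tested for dividing the central binomial coefficient. -/
def cY (κ ν δ : ℕ) (b : ℤ) : ℤ := cZ ν δ (2 * cH κ δ b) ^ 4

variable {ν δ κ : ℕ} {P : MvPolynomial (Fin (ν + 1)) ℤ} {a b g : ℤ}

theorem strictMono_place (hδ : 1 ≤ δ) : StrictMono fun i => (δ + 1) ^ (i + 1) := by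
  intro i j hij
  exact Nat.pow_lt_pow_right (by omega) (by omega)

theorem le_cH (hδ : 1 ≤ δ) (hb : 4 ≤ b) : b ≤ cH κ δ b := by
  unfold cH
  have h1 : (1 : ℤ) ≤ 2 ^ κ := one_le_pow₀ (by norm_num)
  have h2 : b ^ 1 ≤ b ^ δ := pow_le_pow_right₀ (by linarith) hδ
  have h3 : 0 ≤ b ^ δ := by positivity
  nlinarith

theorem cComp_bounds (hδ : 1 ≤ δ) (hb : 4 ≤ b) {Q : ℤ} (hQ : b ≤ Q) :
    0 ≤ cComp ν δ b Q ∧ cComp ν δ b Q < Q ^ (δ + 1) ^ (ν + 2) := by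
  lift b to ℕ using by linarith
  lift Q to ℕ using by linarith
  norm_cast at hb hQ
  have e : cComp ν δ b Q =
      ((∑ i ∈ Finset.range (ν + 1), (b - 1) * Q ^ (δ + 1) ^ (i + 1) : ℕ) : ℤ) := by
    unfold cComp
    push_cast [Nat.cast_sub (show 1 ≤ b by omega)]
    rfl
  rw [e]
  constructor
  · positivity
  · exact_mod_cast sum_digits_lt (v := fun _ => b - 1) (strictMono_place hδ)
      (fun i => by omega) (ν + 1)

theorem abs_cD_le {Q : ℤ} (hQ : 1 ≤ Q) :
    |cD δ P Q| ≤ (∑ m ∈ P.support, |dCoeff δ P m|) * Q ^ (δ + 1) ^ (ν + 2) := by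
  unfold cD
  refine (Finset.abs_sum_le_sum_abs _ _).trans ?_
  rw [Finset.sum_mul]
  refine Finset.sum_le_sum fun m _ => ?_
  rw [abs_mul, abs_of_nonneg (show (0 : ℤ) ≤ Q ^ ((δ + 1) ^ (ν + 2) - wt δ (ν + 2) (kap ν δ m)) by
    positivity)]
  exact mul_le_mul_of_nonneg_left (pow_le_pow_right₀ hQ (by omega)) (abs_nonneg _)

theorem geom_sum_le_pow_self {Q : ℤ} (hQ : 2 ≤ Q) (n : ℕ) : ∑ j ∈ Finset.range n, Q ^ j ≤ Q ^ n := by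
  induction n with
  | zero => simp
  | succ n ih =>
    rw [Finset.sum_range_succ, pow_succ]
    have : 0 < Q ^ n := by positivity
    nlinarith

/-- The shift by `H` outweighs the signed digits, so the shifted product of the codes is nonnegative,
and it has at most `2 * (δ + 1) ^ (ν + 2) + 1` digits. Negative `g` is allowed, since `2 * |g| < G`
makes `G + g` positive. -/
theorem cK_bounds (hδ : 1 ≤ δ)
    (hκ : (ν + 3 : ℤ) ^ δ * ∑ m ∈ P.support, |dCoeff δ P m| < 2 ^ κ)
    (hb : 4 ≤ b) (ha : 0 ≤ a) (hab : a < b) (hg : |2 * g| < cG ν δ (2 * cH κ δ b)) :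
    0 ≤ cK κ δ P a b g ∧
      cK κ δ P a b g < (2 * cH κ δ b) ^ (2 * (δ + 1) ^ (ν + 2) + 1) := by
  have hbH := le_cH (κ := κ) hδ hb
  unfold cK
  set H := cH κ δ b with hH
  set L := ∑ m ∈ P.support, |dCoeff δ P m| with hL
  have hL0 : 0 ≤ L := Finset.sum_nonneg fun _ _ => abs_nonneg _
  set Q := 2 * H with hQ
  set G := cG ν δ Q with hG
  set N := (δ + 1) ^ (ν + 2) with hN
  set e := (δ + 1) ^ (ν + 1) with he
  have hNe : e * δ + e = N := by rw [hN, he]; ring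
  have he2 : 2 ≤ e := by
    have : (δ + 1) ^ 1 ≤ (δ + 1) ^ (ν + 1) := Nat.pow_le_pow_right (by omega) (by omega)
    rw [pow_one] at this
    omega
  have hLH : 3 ^ δ * L ≤ H := by
    have h1 : (3 : ℤ) ^ δ ≤ (ν + 3 : ℤ) ^ δ := pow_le_pow_left₀ (by norm_num) (by linarith) _
    have h2 : (1 : ℤ) ≤ b ^ δ := one_le_pow₀ (by linarith)
    have h3 : (0 : ℤ) < 2 ^ κ := by positivity
    calc 3 ^ δ * L ≤ (ν + 3 : ℤ) ^ δ * L := mul_le_mul_of_nonneg_right h1 hL0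
      _ ≤ 2 ^ κ := hκ.le
      _ ≤ H := by rw [hH, cH]; nlinarith
  have hQ8 : 8 ≤ Q := by linarith
  have hG2 : Q * Q ≤ G := by
    rw [hG, cG, ← he]
    calc Q * Q = Q ^ 2 := by ring
      _ ≤ _ := pow_le_pow_right₀ (by linarith) he2
  rw [abs_lt] at hg
  have hc0 : 0 ≤ 1 + a * Q + (G + g) := by nlinarith
  have hc1 : 1 + a * Q + (G + g) ≤ 3 * G := by nlinarith
  have hcδ : (1 + a * Q + (G + g)) ^ δ ≤ 3 ^ δ * Q ^ (e * δ) := by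
    calc _ ≤ (3 * G) ^ δ := pow_le_pow_left₀ hc0 hc1 _
      _ = _ := by rw [mul_pow, hG, cG, ← pow_mul]
  have hD := abs_cD_le (δ := δ) (P := P) (Q := Q) (by linarith)
  obtain ⟨M, hM⟩ : ∃ M, 2 * N = M + 1 := ⟨2 * N - 1, by omega⟩
  have hprod : |(1 + a * Q + (G + g)) ^ δ * cD δ P Q| ≤ H * Q ^ M := by
    rw [abs_mul, abs_of_nonneg (pow_nonneg hc0 _)]
    calc _ ≤ (3 ^ δ * Q ^ (e * δ)) * (L * Q ^ N) :=
          mul_le_mul hcδ hD (abs_nonneg _) (by positivity)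
      _ = (3 ^ δ * L) * Q ^ (e * δ + N) := by rw [pow_add]; ring
      _ ≤ H * Q ^ M := by
          apply mul_le_mul hLH (pow_le_pow_right₀ (by linarith) (by omega)) (by positivity)
          linarith
  rw [abs_le] at hprod
  have hgeo := geom_sum_le_pow_self (Q := Q) (by linarith) M
  have hgeo0 : 0 ≤ ∑ j ∈ Finset.range M, Q ^ j := Finset.sum_nonneg fun _ _ => by positivity
  rw [hM, Finset.sum_range_succ]
  have hQM : 0 < Q ^ M := by positivity
  constructor
  · nlinarith
  · calc _ ≤ H * Q ^ M + H * (Q ^ M + Q ^ M) := by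
          have : H * (∑ j ∈ Finset.range M, Q ^ j + Q ^ M) ≤ H * (Q ^ M + Q ^ M) :=
            mul_le_mul_of_nonneg_left (by linarith) (by linarith)
          linarith
      _ = (3 * H) * Q ^ M := by ring
      _ < (Q * Q) * Q ^ M := by
          apply mul_lt_mul_of_pos_right _ hQM
          nlinarith
      _ = Q ^ (M + 1 + 1) := by ring

/-- All four entries of the blocks lie below the block size. -/
theorem entries_bounds (hδ : 1 ≤ δ)
    (hκ : (ν + 3 : ℤ) ^ δ * ∑ m ∈ P.support, |dCoeff δ P m| < 2 ^ κ)
    (hb : 4 ≤ b) (ha : 0 ≤ a) (hab : a < b) (hg : |2 * g| < cG ν δ (2 * cH κ δ b)) :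
    (b < cZ ν δ (2 * cH κ δ b)) ∧ (1 ≤ cG ν δ (2 * cH κ δ b)) ∧
    (0 ≤ cG ν δ (2 * cH κ δ b) + g ∧ cG ν δ (2 * cH κ δ b) + g < cZ ν δ (2 * cH κ δ b)) ∧
    (0 ≤ cComp ν δ b (2 * cH κ δ b) ∧
      cComp ν δ b (2 * cH κ δ b) < cZ ν δ (2 * cH κ δ b)) ∧
    (0 ≤ cK κ δ P a b g ∧ cK κ δ P a b g < cZ ν δ (2 * cH κ δ b)) ∧
    (0 ≤ cT κ ν δ b ∧ cT κ ν δ b < cZ ν δ (2 * cH κ δ b)) := by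
  have hbH := le_cH (κ := κ) hδ hb
  obtain ⟨k1, k2⟩ := cK_bounds hδ hκ hb ha hab hg
  obtain ⟨c1, c2⟩ := cComp_bounds (ν := ν) hδ hb (Q := 2 * cH κ δ b) (by linarith)
  unfold cT cZ
  set H := cH κ δ b with hH
  set Q := 2 * H with hQ
  have hQ1 : 1 ≤ Q := by linarith
  have hQ8 : 8 ≤ Q := by linarith
  set N := (δ + 1) ^ (ν + 2) with hN
  have heN : (δ + 1) ^ (ν + 1) ≤ N := Nat.pow_le_pow_right (by omega) (by omega)
  have hG1 : 1 ≤ cG ν δ Q := one_le_pow₀ hQ1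
  have hGN : cG ν δ Q ≤ Q ^ N := pow_le_pow_right₀ hQ1 heN
  have hN1 : Q ^ N * Q ≤ Q ^ (2 * N + 2) := by
    rw [← pow_succ]; exact pow_le_pow_right₀ hQ1 (by omega)
  have h1N : 1 ≤ Q ^ N := one_le_pow₀ hQ1
  have hKZ : Q ^ (2 * N + 1) ≤ Q ^ (2 * N + 2) := pow_le_pow_right₀ hQ1 (by omega)
  have hNZ : 8 * Q ^ N ≤ Q ^ (2 * N + 2) := by nlinarith
  rw [abs_lt] at hg
  refine ⟨?_, hG1, ⟨by linarith, by linarith⟩, ⟨c1, by linarith⟩, ⟨k1, by linarith⟩,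
    mul_nonneg (by linarith) (by linarith), ?_⟩
  · nlinarith
  · nlinarith

/-- The estimates that the Pell equations require of `X`, `G` and `Y`; `b ≤ X` leaves room for `b` as a
factor of `2 ^ (2 * X + 1)`. -/
theorem crude_bounds (hδ : 1 ≤ δ)
    (hκ : (ν + 3 : ℤ) ^ δ * ∑ m ∈ P.support, |dCoeff δ P m| < 2 ^ κ)
    (hb : 4 ≤ b) (ha : 0 ≤ a) (hab : a < b) (hg : |2 * g| < cG ν δ (2 * cH κ δ b)) :
    b ≤ cX κ δ P a b g ∧ 1 ≤ cG ν δ (2 * cH κ δ b) ∧ 2 ≤ cY κ ν δ b := by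
  obtain ⟨hbZ, hG1, ⟨s1, s2⟩, ⟨c1, c2⟩, ⟨k1, k2⟩, t1, t2⟩ := entries_bounds hδ hκ hb ha hab hg
  refine ⟨?_, hG1, ?_⟩
  · unfold cX blocks
    set Z := cZ ν δ (2 * cH κ δ b)
    set S := cG ν δ (2 * cH κ δ b) + g
    have e1 : 0 ≤ Z - 1 - S := by linarith
    have e2 : 0 ≤ Z - 1 - (Z - 1 - cComp ν δ b (2 * cH κ δ b)) := by linarith
    have e3 : 0 ≤ cK κ δ P a b g + cT κ ν δ b := by linarith
    have e4 : 0 ≤ Z - 1 - cK κ δ P a b g := by linarith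
    have e5 : 0 ≤ Z - 1 - cT κ ν δ b := by linarith
    have hZ : 1 ≤ 2 * Z := by linarith
    set R := (Z - 1 - (Z - 1 - cComp ν δ b (2 * cH κ δ b))) + 2 * Z * ((cK κ δ P a b g +
      cT κ ν δ b) + 2 * Z * ((Z - 1 - cK κ δ P a b g) + 2 * Z * (Z - 1 - cT κ ν δ b))) with hR
    have hR0 : 0 ≤ R := by positivity
    have : Z - 1 - S ≤ 2 * Z * ((Z - 1 - S) + 2 * Z * R) := by
      have h0 : 0 ≤ 2 * Z * R := by positivity
      nlinarith
    linarith
  · unfold cY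
    have : cZ ν δ (2 * cH κ δ b) ^ 1 ≤ cZ ν δ (2 * cH κ δ b) ^ 4 :=
      pow_le_pow_right₀ (by linarith) (by norm_num)
    linarith

/-- The divisibility condition expresses that `G + g` is a code and that the tested digit
vanishes. -/
theorem cY_dvd_iff (hP : P.totalDegree ≤ δ) (hδ : 1 ≤ δ)
    (hκ : (ν + 3 : ℤ) ^ δ * ∑ m ∈ P.support, |dCoeff δ P m| < 2 ^ κ) {m : ℕ} (hm : 2 ≤ m)
    (hbm : b = 2 ^ m) {a : ℕ} (hab : (a : ℤ) < b) (hg : |2 * g| < cG ν δ (2 * cH κ δ b)) {X : ℕ}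
    (hX : (X : ℤ) = cX κ δ P a b g) :
    cY κ ν δ b ∣ (((2 * X).choose X : ℕ) : ℤ) ↔
      ∃ v : ℕ → ℕ, (∀ i, (v i : ℤ) < b) ∧ cG ν δ (2 * cH κ δ b) + g =
        ∑ i ∈ Finset.range (ν + 1), (v i : ℤ) * (2 * cH κ δ b) ^ (δ + 1) ^ (i + 1) ∧
        eval (Fin.cases (a : ℤ) (fun i : Fin ν => (v i : ℤ)) : Fin (ν + 1) → ℤ) P = 0 := by
  have hb : 4 ≤ b := by
    rw [hbm]
    calc (4 : ℤ) = 2 ^ 2 := by norm_num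
      _ ≤ 2 ^ m := pow_le_pow_right₀ (by norm_num) hm
  obtain ⟨-, -, ⟨s1, s2⟩, ⟨c1, c2⟩, ⟨k1, k2⟩, t1, t2⟩ :=
    entries_bounds hδ hκ hb (Int.natCast_nonneg a) hab hg
  set N := (δ + 1) ^ (ν + 2) with hN
  set t := κ + m * δ with ht
  have hH : cH κ δ b = (2 : ℤ) ^ t := by rw [cH, hbm, ht, pow_add, pow_mul]
  have hQ : 2 * cH κ δ b = (2 : ℤ) ^ (t + 1) := by rw [hH]; ring
  set k := (t + 1) * (2 * N + 2) with hk
  have hZ : cZ ν δ (2 * cH κ δ b) = (2 : ℤ) ^ k := by rw [cZ, hQ, hk, pow_mul]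
  have hY : cY κ ν δ b = ((2 ^ (4 * k) : ℕ) : ℤ) := by
    rw [cY, hZ, ← pow_mul, mul_comm k]; push_cast; rfl
  rw [hY, Int.natCast_dvd_natCast]
  rw [cX] at hX
  obtain ⟨S, hS⟩ := Int.eq_ofNat_of_zero_le s1
  obtain ⟨K, hK⟩ := Int.eq_ofNat_of_zero_le k1
  have hpm : 1 ≤ 2 ^ m := Nat.one_le_two_pow
  have hpt : 1 ≤ 2 ^ t := Nat.one_le_two_pow
  obtain ⟨C, hCd⟩ : ∃ C, C = ∑ i ∈ Finset.range (ν + 1), (2 ^ m - 1) *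
    (2 ^ (t + 1)) ^ ((fun i => (δ + 1) ^ (i + 1)) i) := ⟨_, rfl⟩
  have hC : cComp ν δ b (2 * cH κ δ b) = C := by
    rw [hCd, cComp, hQ, hbm]
    push_cast [Nat.cast_sub hpm]
    rfl
  obtain ⟨T, hTd⟩ : ∃ T, T = (2 ^ t - 1) * 2 ^ ((t + 1) * N) := ⟨_, rfl⟩
  have hT : cT κ ν δ b = T := by
    rw [hTd, cT, hQ, hH]
    push_cast [Nat.cast_sub hpt]
    rw [pow_mul]
  rw [hS, hZ] at s2
  rw [hC, hZ] at c2
  rw [hK, hZ] at k2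
  rw [hT, hZ] at t2
  have s2 : S < 2 ^ k := by exact_mod_cast s2
  have c2 : C < 2 ^ k := by exact_mod_cast c2
  have k2 : K < 2 ^ k := by exact_mod_cast k2
  have t2 : T < 2 ^ k := by exact_mod_cast t2
  have hCC : cZ ν δ (2 * cH κ δ b) - 1 - cComp ν δ b (2 * cH κ δ b) = ((2 ^ k - 1 - C : ℕ) : ℤ) := by
    rw [hZ, hC, Nat.sub_sub, Nat.cast_sub (by omega)]
    push_cast
    ring
  rw [hCC, hS, hK, hT, hZ] at hX
  rw [two_pow_dvd_choose_blocks s2 (by omega) k2 t2 hX, land_compl_eq_zero_iff s2 c2, hCd,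
    bSub_mask_iff (by rw [ht]; nlinarith) (strictMono_place hδ), hTd, land_block_eq_zero_iff]
  have key : ∀ v : ℕ → ℕ, (∀ i, v i < 2 ^ m) → S = ∑ i ∈ Finset.range (ν + 1), v i *
      (2 ^ (t + 1)) ^ ((fun i => (δ + 1) ^ (i + 1)) i) →
      (2 ^ t ∣ K / 2 ^ ((t + 1) * N) ↔
        eval (Fin.cases (a : ℤ) (fun i : Fin ν => (v i : ℤ)) : Fin (ν + 1) → ℤ) P = 0) := by
    intro v hv hSv
    rw [← sum_kap_eq_eval (δ := δ), pow_mul, pow_succ', hN]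
    apply coding_dvd_iff (H := 2 ^ t) (fun m' hm' => kap_mem hP hm')
    · have hle : ∀ i ∈ Finset.range (ν + 2 + 1), (codeVal a v i : ℤ) ≤ b := by
        intro i _
        rcases i with _ | _ | i
        · simp only [codeVal, Nat.cast_one]; linarith
        · exact hab.le
        · rw [hbm]; exact_mod_cast (hv i).le
      have h1 := Finset.sum_le_card_nsmul _ _ _ hle
      rw [Finset.card_range, nsmul_eq_mul] at h1
      push_cast at h1
      have h0 : (0 : ℤ) ≤ ∑ i ∈ Finset.range (ν + 2 + 1), (codeVal a v i : ℤ) :=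
        Finset.sum_nonneg fun _ _ => Int.natCast_nonneg _
      have h2 := pow_le_pow_left₀ h0 h1 δ
      have hL0 : 0 ≤ ∑ m ∈ P.support, |dCoeff δ P m| := Finset.sum_nonneg fun _ _ => abs_nonneg _
      have h3 : (1 : ℤ) ≤ b ^ δ := one_le_pow₀ (by linarith)
      calc _ ≤ (((ν : ℤ) + 2 + 1) * b) ^ δ * ∑ m ∈ P.support, |dCoeff δ P m| :=
            mul_le_mul_of_nonneg_right h2 hL0
        _ = ((ν + 3 : ℤ) ^ δ * ∑ m ∈ P.support, |dCoeff δ P m|) * b ^ δ := by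
            rw [mul_pow]; ring
        _ < 2 ^ κ * b ^ δ := mul_lt_mul_of_pos_right hκ (by linarith)
        _ = ((2 ^ t : ℕ) : ℤ) := by push_cast; rw [← hH, cH]
    · have hQ' : (2 : ℤ) * ((2 ^ t : ℕ) : ℤ) = 2 * cH κ δ b := by rw [hH]; push_cast; rfl
      have hH' : ((2 ^ t : ℕ) : ℤ) = cH κ δ b := by rw [hH]; push_cast; rfl
      rw [hQ', hH']
      have hK' : (K : ℤ) = cK κ δ P a b g := hK.symm
      rw [hK', cK]
      congr 3
      rw [hS, hSv, Finset.sum_range_succ' _ (ν + 2), Finset.sum_range_succ' _ (ν + 1), hQ]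
      simp only [codeVal, expo]
      push_cast
      ring
  constructor
  · rintro ⟨⟨v, hv, hSv⟩, h⟩
    refine ⟨v, ?_, ?_, (key v hv hSv).1 h⟩
    · intro i; rw [hbm]; exact_mod_cast hv i
    · rw [hS, hSv, hQ]; push_cast; rfl
  · rintro ⟨v, hv, hSv, h⟩
    have hv' : ∀ i, v i < 2 ^ m := by
      intro i; have := hv i; rw [hbm] at this; exact_mod_cast this
    have hSv' : S = ∑ i ∈ Finset.range (ν + 1), v i *
        (2 ^ (t + 1)) ^ ((fun i => (δ + 1) ^ (i + 1)) i) := by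
      rw [hS, hQ] at hSv
      exact_mod_cast hSv
    exact ⟨⟨v, hv', hSv'⟩, (key v hv' hSv').2 h⟩

/-- A zero of `P` with small coordinates has a code with leading digit `1`. -/
theorem exists_code (hP : P.totalDegree ≤ δ) (hδ : 1 ≤ δ)
    (hκ : (ν + 3 : ℤ) ^ δ * ∑ m ∈ P.support, |dCoeff δ P m| < 2 ^ κ) {m : ℕ} (hm : 2 ≤ m)
    (hbm : b = 2 ^ m) {a : ℕ} (hab : (a : ℤ) < b) {z : Fin ν → ℕ} (hz : ∀ i, (z i : ℤ) < b)
    (h : eval (Fin.cases (a : ℤ) (fun i => (z i : ℤ)) : Fin (ν + 1) → ℤ) P = 0) :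
    ∃ g, |2 * g| < cG ν δ (2 * cH κ δ b) ∧ ∀ X : ℕ, (X : ℤ) = cX κ δ P a b g →
      cY κ ν δ b ∣ (((2 * X).choose X : ℕ) : ℤ) := by
  have hb : 4 ≤ b := by
    rw [hbm]
    calc (4 : ℤ) = 2 ^ 2 := by norm_num
      _ ≤ 2 ^ m := pow_le_pow_right₀ (by norm_num) hm
  have hbH := le_cH (κ := κ) hδ hb
  -- The leading digit `1` contributes `G`, so the unknown `g` collects the other digits.
  set v : ℕ → ℕ := fun i => if h : i < ν then z ⟨i, h⟩ else 1 with hv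
  have hvb : ∀ i, (v i : ℤ) < b := by
    intro i
    simp only [hv]
    split_ifs
    · exact hz _
    · push_cast; linarith
  obtain ⟨Q, hQ⟩ := Int.eq_ofNat_of_zero_le (show 0 ≤ 2 * cH κ δ b by linarith)
  have hlt : 2 * ∑ i ∈ Finset.range ν, v i * Q ^ (δ + 1) ^ (i + 1) < Q ^ (δ + 1) ^ (ν + 1) := by
    rw [Finset.mul_sum]
    have := sum_digits_lt (v := fun i => 2 * v i) (B := Q) (strictMono_place hδ)
      (fun i => by have := hvb i; omega) ν
    simpa only [mul_assoc] using this
  refine ⟨((∑ i ∈ Finset.range ν, v i * Q ^ (δ + 1) ^ (i + 1) : ℕ) : ℤ), ?_, ?_⟩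
  · rw [abs_of_nonneg (by positivity), hQ, cG]
    exact_mod_cast hlt
  · intro X hX
    refine (cY_dvd_iff hP hδ hκ hm hbm hab ?_ hX).2 ⟨v, hvb, ?_, ?_⟩
    · rw [abs_of_nonneg (by positivity), hQ, cG]
      exact_mod_cast hlt
    · rw [Finset.sum_range_succ, cG, hQ]
      simp only [hv, lt_irrefl, dif_neg, not_false_iff]
      push_cast
      ring
    · rw [← h]
      congr 2
      funext i
      refine Fin.cases ?_ (fun j => ?_) i
      · rfl
      · simp [hv]

end CodingTop

/-! ### Quotients of Pell solutions -/

section Estimates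

/-- Since `(2 M) ^ 2 / (2 L) = (V + 1) ^ 2 / V`, the bounds on `C` and `J` compare `C / J` with
`(V + 1) ^ (2 X) / V ^ X` up to Bernoulli factors. -/
theorem ratio_bounds {X : ℕ} {u V M L C J : ℝ} (hu : 1 ≤ u) (hV : 1 ≤ V) (hM : M = u * (V + 1))
    (hL : L = 2 * u ^ 2 * V) (hC1 : (2 * M - 1) ^ (2 * X) ≤ C) (hC2 : C ≤ (2 * M) ^ (2 * X))
    (hJ1 : (2 * L - 1) ^ X ≤ J) (hJ2 : J ≤ (2 * L) ^ X) :
    (V + 1) ^ (2 * X) / V ^ X * (1 - X / M) ≤ C / J ∧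
      C / J * (1 - X / (2 * L)) ≤ (V + 1) ^ (2 * X) / V ^ X := by
  have hM2 : 2 ≤ M := by rw [hM]; nlinarith
  have hL2 : 2 ≤ L := by rw [hL]; nlinarith
  have hρ : (V + 1) ^ (2 * X) / V ^ X = (2 * M) ^ (2 * X) / (2 * L) ^ X := by
    rw [pow_mul, pow_mul, ← div_pow, ← div_pow, hM, hL]
    congr 1
    field_simp
  have hJ0 : 0 < J := lt_of_lt_of_le (pow_pos (by linarith) _) hJ1
  have hC0 : 0 < C := lt_of_lt_of_le (pow_pos (by linarith) _) hC1
  have hLX : 0 < (2 * L) ^ X := by positivity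
  rw [hρ]
  constructor
  · have h1 : 1 + ((2 * X : ℕ) : ℝ) * (-(1 / (2 * M))) ≤ (1 + -(1 / (2 * M))) ^ (2 * X) := by
      apply one_add_mul_le_pow
      have : 1 / (2 * M) ≤ 1 := by rw [div_le_one (by linarith)]; linarith
      linarith
    have h2 : (1 - X / M : ℝ) = 1 + ((2 * X : ℕ) : ℝ) * (-(1 / (2 * M))) := by
      push_cast; field_simp; ring
    have h3 : (2 * M) ^ (2 * X) * (1 + -(1 / (2 * M))) ^ (2 * X) = (2 * M - 1) ^ (2 * X) := by
      rw [← mul_pow]; congr 1; field_simp; ring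
    rw [div_mul_eq_mul_div, div_le_div_iff₀ hLX hJ0]
    have h4 : (2 * M) ^ (2 * X) * (1 - X / M) ≤ C := by
      rw [h2]
      calc _ ≤ (2 * M) ^ (2 * X) * (1 + -(1 / (2 * M))) ^ (2 * X) :=
            mul_le_mul_of_nonneg_left h1 (by positivity)
        _ ≤ C := h3.le.trans hC1
    calc _ ≤ C * J := mul_le_mul_of_nonneg_right h4 hJ0.le
      _ ≤ _ := mul_le_mul_of_nonneg_left hJ2 hC0.le
  · have h1 : 1 + (X : ℝ) * (-(1 / (2 * L))) ≤ (1 + -(1 / (2 * L))) ^ X := by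
      apply one_add_mul_le_pow
      have : 1 / (2 * L) ≤ 1 := by rw [div_le_one (by linarith)]; linarith
      linarith
    have h2 : (1 - X / (2 * L) : ℝ) = 1 + (X : ℝ) * (-(1 / (2 * L))) := by
      ring
    have h3 : (2 * L) ^ X * (1 + -(1 / (2 * L))) ^ X = (2 * L - 1) ^ X := by
      rw [← mul_pow]; congr 1; field_simp; ring
    rw [div_mul_eq_mul_div, div_le_div_iff₀ hJ0 hLX]
    have h4 : (1 - X / (2 * L)) * (2 * L) ^ X ≤ J := by
      rw [h2]
      calc _ ≤ (1 + -(1 / (2 * L))) ^ X * (2 * L) ^ X :=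
            mul_le_mul_of_nonneg_right h1 (by positivity)
        _ ≤ J := by rw [mul_comm, h3]; exact hJ1
    calc C * (1 - X / (2 * L)) * (2 * L) ^ X = C * ((1 - X / (2 * L)) * (2 * L) ^ X) := by ring
      _ ≤ C * J := mul_le_mul_of_nonneg_left h4 hC0.le
      _ ≤ _ := mul_le_mul_of_nonneg_right hC2 hJ0.le

/-- The integer part of `(V + 1) ^ (2 X) / V ^ X` determines the central binomial coefficient
modulo `V`. -/
theorem binomial_quotient (X : ℕ) {V : ℕ} (hV : 1 ≤ V) : ∃ Q : ℕ, ∃ r : ℝ,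
    0 ≤ r ∧ r ≤ 4 ^ X / V ∧
    ((V : ℝ) + 1) ^ (2 * X) / (V : ℝ) ^ X = V * Q + (2 * X).choose X + r := by
  set low := ∑ i ∈ Finset.range X, V ^ i * (2 * X).choose i with hlow
  set Q := ∑ i ∈ Finset.range X, V ^ i * (2 * X).choose (X + (i + 1)) with hQ
  have hexp : (V + 1) ^ (2 * X) = low + V ^ X * ((2 * X).choose X + V * Q) := by
    rw [add_pow, show 2 * X + 1 = X + (X + 1) by ring, Finset.sum_range_add,
      Finset.sum_range_succ', hQ, mul_add, Finset.mul_sum, Finset.mul_sum,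
      add_comm (Finset.sum _ _) (V ^ (X + 0) * _ * _)]
    simp only [one_pow, mul_one, add_zero, Nat.cast_id]
    congr 2
    exact Finset.sum_congr rfl fun i _ => by ring
  have hle : V * low ≤ V ^ X * 4 ^ X := by
    rw [hlow, Finset.mul_sum]
    calc _ ≤ ∑ i ∈ Finset.range X, V ^ X * (2 * X).choose i := by
          refine Finset.sum_le_sum fun i hi => ?_
          rw [← mul_assoc, ← pow_succ']
          exact Nat.mul_le_mul_right _ (Nat.pow_le_pow_right hV (Finset.mem_range.1 hi))
      _ = V ^ X * ∑ i ∈ Finset.range X, (2 * X).choose i := by rw [Finset.mul_sum]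
      _ ≤ V ^ X * 4 ^ X := by
          apply Nat.mul_le_mul_left
          rw [show 4 ^ X = 2 ^ (2 * X) by rw [pow_mul]; norm_num, ← Nat.sum_range_choose]
          exact Finset.sum_le_sum_of_subset (Finset.range_subset_range.2 (by omega))
  have hV0 : (0 : ℝ) < V := by exact_mod_cast hV
  have hVX : (0 : ℝ) < (V : ℝ) ^ X := by positivity
  refine ⟨Q, low / (V : ℝ) ^ X, by positivity, ?_, ?_⟩
  · rw [div_le_div_iff₀ hVX hV0]
    have : (V : ℝ) * low ≤ V ^ X * 4 ^ X := by exact_mod_cast hle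
    linarith
  · have : ((V : ℝ) + 1) ^ (2 * X) = low + V ^ X * ((2 * X).choose X + V * Q) := by
      exact_mod_cast hexp
    rw [this]
    field_simp
    ring

end Estimates

section PowerOfTwo

open Pell

/-- Modulo `4 a - 5`, the number `y_n(a)` satisfies a quadratic congruence with `2 ^ n`. -/
theorem yn_two_pow_dvd {a : ℕ} (a1 : 1 < a) (n : ℕ) :
    (4 * a - 5 : ℤ) ∣ 3 * 2 ^ n * yn a1 n - 2 * ((2 ^ n) ^ 2 - 1) := by
  have h := x_sub_y_dvd_pow a1 2 n
  have hp := pell_eq_int a1 n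
  simp only [xz, yz] at h
  push_cast at h
  obtain ⟨c, hc⟩ := h
  generalize (xn a1 n : ℤ) = x at *
  generalize (yn a1 n : ℤ) = y at *
  set t : ℤ := 2 ^ n
  have hx : x = y * (a - 2) + t - (4 * a - 5) * c := by linear_combination -hc
  rw [hx] at hp
  refine ⟨-4 * (y * (a - 2) + t) * c + 2 * (4 * a - 5) * c ^ 2 - 2 * y ^ 2 + t * y, ?_⟩
  linear_combination 2 * hp

end PowerOfTwo

/-! ### The system of Pell conditions -/

section Bridge

/-- A relative error of at most `1 / (16 G q)` becomes an absolute error of at most `5 / (16 G)`, for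
numbers of the size of `q`. Here `t` stands for `C / J` and `ρ` for `(V + 1) ^ (2 X) / V ^ X`. -/
theorem quotient_close {X ρ t G q u V M L : ℝ} (hX : 1 ≤ X) (hG : 1 ≤ G) (hq : 1 ≤ q)
    (hV : 1 ≤ V) (hu : u = 1 + (4 * G * X * q) ^ 2) (hM : M = u * (V + 1))
    (hL : L = 2 * u ^ 2 * V) (hρ : 0 ≤ ρ) (h1 : ρ * (1 - X / M) ≤ t)
    (h2 : t * (1 - X / (2 * L)) ≤ ρ) (htq : t ≤ 4 * q) :
    ρ ≤ 5 * q ∧ |t - ρ| ≤ 5 / (16 * G) := by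
  have hGq : 1 ≤ G * q := by nlinarith
  have hu1 : X * (16 * (G * q)) ≤ u := by
    have hGX : 1 ≤ G * X * q := by nlinarith
    rw [hu]
    nlinarith
  have hu0 : 1 ≤ u := by nlinarith
  have hMu : u ≤ M := by rw [hM]; nlinarith
  have hLu : u ≤ L := by rw [hL]; nlinarith [mul_le_mul hu0 hV zero_le_one (by linarith)]
  have hXM : X / M ≤ 1 / (16 * (G * q)) := by
    rw [div_le_div_iff₀ (by linarith) (by linarith)]
    linarith
  have hXL : X / (2 * L) ≤ 1 / (16 * (G * q)) := by
    rw [div_le_div_iff₀ (by linarith) (by linarith)]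
    linarith
  have h16 : 1 / (16 * (G * q)) ≤ 1 / 16 := by
    apply one_div_le_one_div_of_le <;> linarith
  have hρ5 : ρ ≤ 5 * q := by nlinarith
  have e : 1 / (16 * (G * q)) * (5 * q) = 5 / (16 * G) := by field_simp
  have hp : 0 ≤ 1 / (16 * (G * q)) := by positivity
  refine ⟨hρ5, ?_⟩
  rw [abs_le, ← e]
  constructor
  · have : ρ * (X / M) ≤ (5 * q) * (1 / (16 * (G * q))) :=
      mul_le_mul hρ5 hXM (div_nonneg (by linarith) (by linarith)) (by linarith)
    linarith
  · have : t * (X / (2 * L)) ≤ (5 * q) * (1 / (16 * (G * q))) :=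
      mul_le_mul (by linarith) hXL (div_nonneg (by linarith) (by linarith)) (by linarith)
    linarith

/-- The data from which the Pell equations are built: the parameters `G`, `g`, `X`, `Y`, `β` and the
unknowns `h`, `k`, `l`, `w`, `x`, `y`. -/
structure PellData where
  (G g X Y β h k l w x y : ℤ)

namespace PellData

variable (s : PellData)

/-- The number that is to be recognized as an integer part. -/
def q : ℤ := s.l * s.Y
/-- The index of the solution `C`. -/
def B : ℤ := 2 * s.X + 1
/-- A scale that makes the approximation errors small. -/
def u : ℤ := 1 + (4 * s.G * s.X * s.q) ^ 2
/-- The number that is to be recognized as `2 ^ B`. -/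
def W : ℤ := s.β ^ 2 * s.w
/-- The modulus in the binomial expansion of `(V + 1) ^ (2 X)`. -/
def V : ℤ := 16 * (s.G * s.Y * s.W) ^ 2
/-- The parameter of the first Pell equation. -/
def M : ℤ := s.u * (s.V + 1)
/-- The parameter of the second Pell equation. -/
def L : ℤ := 2 * s.u ^ 2 * s.V
/-- The number that is to be recognized as `y_B(M)`. -/
def C : ℤ := s.B + (s.M - 1) * s.h
/-- A square when `C` solves the first Pell equation. -/
def D : ℤ := (s.M ^ 2 - 1) * s.C ^ 2 + 1
/-- A multiple of `C ^ 2` solving the first Pell equation. -/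
def E : ℤ := s.C ^ 2 * s.D * s.x
/-- A square when `E` solves the first Pell equation. -/
def F : ℤ := (s.M ^ 2 - 1) * s.E ^ 2 + 1
/-- The parameter of the auxiliary Pell equation. -/
def Gg : ℤ := 1 + (s.M - 1) * (s.F - 1) ^ 2
/-- A solution of the auxiliary Pell equation, congruent to `C` modulo `F` and to `B` modulo
`C`. -/
def H : ℤ := s.C + (s.B - s.C) * s.F + s.y * s.C * s.F
/-- A square when `H` solves the auxiliary Pell equation. -/
def I : ℤ := (s.Gg ^ 2 - 1) * s.H ^ 2 + 1
/-- The number that is to be recognized as `y_{X+1}(L)`. -/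
def J : ℤ := s.X + 1 + s.k * (s.L - 1)
/-- A square when `J` solves the second Pell equation. -/
def A : ℤ := (s.L ^ 2 - 1) * s.J ^ 2 + 1
/-- Positivity of this number expresses `(C / J - q) ^ 2 + (g / G) ^ 2 < 1 / 4` and that several
quantities do not vanish. -/
def R : ℤ := (s.β * s.w * s.x * s.l) ^ 2 *
  (s.J ^ 2 * (s.G ^ 2 - 4 * s.g ^ 2) - 4 * s.G ^ 2 * (s.C - s.q * s.J) ^ 2)
/-- The modulus of the test for `W = 2 ^ B`. -/
def S : ℤ := 4 * s.M - 5
/-- Divisibility of this number by `S` expresses `W = 2 ^ B`. -/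
def T : ℤ := 3 * s.W * s.C - 2 * (s.W ^ 2 - 1)

theorem one_le_u : 1 ≤ s.u := by
  unfold u; have := sq_nonneg (4 * s.G * s.X * s.q); linarith

theorem V_nonneg : 0 ≤ s.V := by unfold V; positivity

theorem one_le_M : 1 ≤ s.M := by
  unfold M; have := s.one_le_u; have := s.V_nonneg; nlinarith

/-- The solutions `C` and `J` of the Pell equations give a close approximation of a power of
`V + 1`. -/
theorem approx {X V : ℕ} (hsX : s.X = X) (hsV : s.V = V) (hX : 1 ≤ X) (hV : 1 ≤ V) (hG : 1 ≤ s.G)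
    (hq : 1 ≤ s.q) {C J : ℕ} {M L : ℕ} (hM : s.M = M) (hL : s.L = L) (M1 : 1 < M) (L1 : 1 < L)
    (hC : C = Pell.yn M1 (2 * X + 1)) (hJ : J = Pell.yn L1 (X + 1)) :
    0 < (J : ℝ) ∧ 0 < (C : ℝ) / J ∧
    ((C : ℝ) / J) * (1 / 2) ≤ ((V : ℝ) + 1) ^ (2 * X) / (V : ℝ) ^ X ∧
    ((C : ℝ) / J ≤ 4 * s.q → ((V : ℝ) + 1) ^ (2 * X) / (V : ℝ) ^ X ≤ 5 * s.q ∧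
    |(C : ℝ) / J - ((V : ℝ) + 1) ^ (2 * X) / (V : ℝ) ^ X| ≤ 5 / (16 * s.G)) := by
  have hC1 := le_yn_succ M1 (2 * X)
  have hC2 := yn_succ_le M1 (2 * X)
  have hJ1 := le_yn_succ L1 X
  have hJ2 := yn_succ_le L1 X
  rw [← hC] at hC1 hC2
  rw [← hJ] at hJ1 hJ2
  have hM' : (M : ℝ) = (s.u : ℝ) * (V + 1) := by
    have : (M : ℤ) = s.u * (V + 1) := by rw [← hM, ← hsV]; rfl
    exact_mod_cast this
  have hL' : (L : ℝ) = 2 * (s.u : ℝ) ^ 2 * V := by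
    have : (L : ℤ) = 2 * s.u ^ 2 * V := by rw [← hL, ← hsV]; rfl
    exact_mod_cast this
  have hu' : (s.u : ℝ) = 1 + (4 * (s.G : ℝ) * X * s.q) ^ 2 := by
    have : s.u = 1 + (4 * s.G * X * s.q) ^ 2 := by rw [← hsX]; rfl
    exact_mod_cast this
  have hu1 : (1 : ℝ) ≤ s.u := by exact_mod_cast s.one_le_u
  have hV1 : (1 : ℝ) ≤ V := by exact_mod_cast hV
  have hX1 : (1 : ℝ) ≤ X := by exact_mod_cast hX
  have hC1' : (2 * (M : ℝ) - 1) ^ (2 * X) ≤ C := by exact_mod_cast hC1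
  have hC2' : (C : ℝ) ≤ (2 * (M : ℝ)) ^ (2 * X) := by exact_mod_cast hC2
  have hJ1' : (2 * (L : ℝ) - 1) ^ X ≤ J := by exact_mod_cast hJ1
  have hJ2' : (J : ℝ) ≤ (2 * (L : ℝ)) ^ X := by exact_mod_cast hJ2
  obtain ⟨r1, r2⟩ := ratio_bounds hu1 hV1 hM' hL' hC1' hC2' hJ1' hJ2'
  have M1' : (1 : ℝ) < M := by exact_mod_cast M1
  have L1' : (1 : ℝ) < L := by exact_mod_cast L1
  have J0 : (0 : ℝ) < J := lt_of_lt_of_le (pow_pos (by linarith) _) hJ1'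
  have C0 : (0 : ℝ) < C := lt_of_lt_of_le (pow_pos (by linarith) _) hC1'
  have t0 : 0 < (C : ℝ) / J := by positivity
  have hG' : (1 : ℝ) ≤ s.G := by exact_mod_cast hG
  have hq' : (1 : ℝ) ≤ s.q := by exact_mod_cast hq
  refine ⟨J0, t0, ?_, fun h => quotient_close hX1 hG' hq' hV1 hu' hM' hL' (by positivity)
    r1 r2 h⟩
  have hXL : (X : ℝ) / (2 * L) ≤ 1 / 2 := by
    rw [div_le_div_iff₀ (by linarith) (by norm_num)]
    have h4 : (X : ℝ) ≤ s.u := by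
      have : 1 ≤ (s.G : ℝ) * s.q := by nlinarith
      have : (X : ℝ) ≤ s.G * X * s.q := by nlinarith
      rw [hu']; nlinarith
    have h5 : (s.u : ℝ) ≤ L := by
      rw [hL']; nlinarith [mul_le_mul hu1 hV1 zero_le_one (by linarith)]
    linarith
  nlinarith

end PellData
end Bridge

/-! ### Soundness of the Pell conditions -/

namespace PellData

variable (s : PellData)

theorem one_le_D : 1 ≤ s.D := by
  unfold D; have := s.one_le_M
  have : 0 ≤ (s.M ^ 2 - 1) * s.C ^ 2 := mul_nonneg (by nlinarith) (sq_nonneg _)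
  linarith

theorem one_le_F : 1 ≤ s.F := by
  unfold F; have := s.one_le_M
  have : 0 ≤ (s.M ^ 2 - 1) * s.E ^ 2 := mul_nonneg (by nlinarith) (sq_nonneg _)
  linarith

theorem one_le_I : 1 ≤ s.I := by
  have : 1 ≤ s.Gg := by
    unfold Gg; have := s.one_le_M
    have : 0 ≤ (s.M - 1) * (s.F - 1) ^ 2 := mul_nonneg (by linarith) (sq_nonneg _)
    linarith
  unfold I
  have : 0 ≤ (s.Gg ^ 2 - 1) * s.H ^ 2 := mul_nonneg (by nlinarith) (sq_nonneg _)
  linarith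

/-- Size estimates valid as soon as the unknowns entering `R` do not vanish. -/
theorem sizes (hX : 1 ≤ s.X) (hY : 2 ≤ s.Y) (hG : 1 ≤ s.G) (hq : s.q ≠ 0) (hW : s.W ≠ 0) :
    64 * s.W ^ 2 ≤ s.V ∧ 64 ≤ s.V ∧ 16 * s.q ^ 2 ≤ s.u ∧ 17 * s.X ≤ s.u ∧ 17 ≤ s.u ∧
      s.u * s.V ≤ s.M ∧ 2 * s.M ≤ s.L := by
  have hW2 : 0 < s.W ^ 2 := by positivity
  have hq2 : 0 < s.q ^ 2 := by positivity
  have hG2 : 1 ≤ s.G ^ 2 := by nlinarith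
  have hX2 : s.X ≤ s.X ^ 2 := by nlinarith
  have hY2 : 4 ≤ s.Y ^ 2 := by nlinarith
  have hGY : 4 ≤ s.G ^ 2 * s.Y ^ 2 := by nlinarith
  have hV : 64 * s.W ^ 2 ≤ s.V := by unfold V; nlinarith
  have hGX : s.X ≤ s.G ^ 2 * s.X ^ 2 := by nlinarith
  have hGXq : s.X ≤ s.G ^ 2 * s.X ^ 2 * s.q ^ 2 := by nlinarith
  have hGXq' : s.q ^ 2 ≤ s.G ^ 2 * s.X ^ 2 * s.q ^ 2 := by nlinarith
  have hu : s.u = 1 + 16 * (s.G ^ 2 * s.X ^ 2 * s.q ^ 2) := by unfold u; ring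
  have hu16 : 17 ≤ s.u := by linarith
  have hv64 : 64 ≤ s.V := by linarith
  refine ⟨hV, hv64, by linarith, ?_, hu16, ?_, ?_⟩
  · rw [hu]
    have : 1 ≤ s.G ^ 2 * s.q ^ 2 := by nlinarith
    by_cases h1 : s.X = 1
    · rw [h1]; nlinarith
    · have : 2 ≤ s.X := by omega
      have : 2 * s.X ≤ s.X ^ 2 := by nlinarith
      nlinarith
  · unfold M; nlinarith
  · unfold M L
    have : s.V + 1 ≤ s.u * s.V := by nlinarith
    nlinarith

/-- Positivity of `R` means that `q` is the integer nearest to `C / J`. -/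
theorem of_R_pos (hR : 0 < s.R) : s.β ≠ 0 ∧ s.w ≠ 0 ∧ s.x ≠ 0 ∧ s.l ≠ 0 ∧
    4 * s.g ^ 2 < s.G ^ 2 ∧ 4 * (s.C - s.q * s.J) ^ 2 < s.J ^ 2 := by
  unfold R at hR
  have hne : s.β * s.w * s.x * s.l ≠ 0 := by
    intro h; rw [h] at hR; simp at hR
  have hpos : 0 < s.J ^ 2 * (s.G ^ 2 - 4 * s.g ^ 2) - 4 * s.G ^ 2 * (s.C - s.q * s.J) ^ 2 :=
    pos_of_mul_pos_right hR (sq_nonneg _)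
  simp only [mul_ne_zero_iff] at hne
  obtain ⟨⟨⟨h1, h2⟩, h3⟩, h4⟩ := hne
  have hJ2 := sq_nonneg s.J
  have hG2 := sq_nonneg s.G
  have hd := sq_nonneg (s.C - s.q * s.J)
  have hg2 := sq_nonneg s.g
  refine ⟨h1, h2, h3, h4, ?_, ?_⟩
  · by_contra hcon
    nlinarith [mul_nonneg hJ2 (show 0 ≤ 4 * s.g ^ 2 - s.G ^ 2 by linarith), mul_nonneg hG2 hd]
  · by_contra hcon
    nlinarith [mul_nonneg hG2 (show 0 ≤ 4 * (s.C - s.q * s.J) ^ 2 - s.J ^ 2 by linarith),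
      mul_nonneg hJ2 hg2]

/-- `C` is `y_B(M)`: the congruences that `eq_yn_of_squares` requires are built into `C`, `E` and `H`. -/
theorem eq_yn_C {X M : ℕ} (hsX : s.X = X) (hX : 1 ≤ X) (hM : s.M = M) (M1 : 1 < M)
    (hMX : 17 * s.X ≤ s.M) (hx : s.x ≠ 0)
    (sD : IsSquare s.D) (sF : IsSquare s.F) (sI : IsSquare s.I) :
    s.C = Pell.yn M1 (2 * X + 1) := by
  have hB : s.B = ((2 * X + 1 : ℕ) : ℤ) := by unfold B; rw [hsX]; push_cast; ring
  have hCB : s.C ≡ ((2 * X + 1 : ℕ) : ℤ) [ZMOD (M : ℤ) - 1] := by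
    rw [← hB, ← hM]
    exact Int.modEq_iff_dvd.2 ⟨-s.h, by unfold C; ring⟩
  have hC0 : s.C ≠ 0 := by
    intro h
    rw [h] at hCB
    have := Int.le_of_dvd (by omega) (Int.modEq_iff_dvd.1 hCB)
    push_cast at this
    omega
  have hD := s.one_le_D
  have hE0 : s.E ≠ 0 := by
    unfold E
    exact mul_ne_zero (mul_ne_zero (pow_ne_zero _ hC0) (by omega)) hx
  have hCE : s.C ^ 2 ∣ s.E := ⟨s.D * s.x, by unfold E; ring⟩
  have hF : s.F = ((M : ℤ) ^ 2 - 1) * s.E ^ 2 + 1 := by rw [← hM]; rfl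
  refine eq_yn_of_squares M1 (by omega) (by omega) hCB hE0 hCE hF
    (G := s.Gg) (H := s.H) (by rw [← hM]; rfl) ⟨s.B - s.C + s.y * s.C, by unfold H; ring⟩
    ?_ (by rw [← hM]; exact sD) sF sI
  obtain ⟨c, hc⟩ := hCE
  rw [← hB]
  refine ⟨1 + (s.B - s.C) * (s.M ^ 2 - 1) * s.C * c * s.E + s.y * s.F - 1 * 1, ?_⟩
  have : s.F - 1 = (s.M ^ 2 - 1) * (s.C ^ 2 * c) * s.E := by
    rw [hF, ← hM, ← hc]; ring
  unfold H
  linear_combination (s.B - s.C) * this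

/-- Being congruent to `X + 1` modulo `L - 1` leaves only `y_{X+1}(L)` and, up to sign, solutions of
large index; those are excluded because `C / J` would be too small to be close to `q ≠ 0`. -/
theorem eq_yn_J {X M L : ℕ} (hsX : s.X = X) (hX : 1 ≤ X) (M1 : 1 < M)
    (hL : s.L = L) (L1 : 1 < L) (hLX : 17 * X ≤ M) (hML : 2 * M ≤ L)
    (hC : s.C = Pell.yn M1 (2 * X + 1)) (hq : s.q ≠ 0)
    (hJ : 4 * (s.C - s.q * s.J) ^ 2 < s.J ^ 2) (sA : IsSquare s.A) :
    s.J = Pell.yn L1 (X + 1) := by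
  unfold A at sA
  rw [hL] at sA
  obtain ⟨j, hj, -⟩ := exists_yn_of_isSquare L1 sA
  have hmod := yn_modEq_int L1 j
  rw [← hj] at hmod
  have hd : ((L : ℤ) - 1) ∣ s.J - (X + 1) := ⟨s.k, by unfold J; rw [hsX, hL]; ring⟩
  have hbig : ¬ (2 * X + 2 ≤ j) := by
    intro hcon
    obtain ⟨i, rfl⟩ : ∃ i, j = i + 1 := ⟨j - 1, by omega⟩
    have h1 := le_yn_succ L1 i
    have h2 := yn_succ_le M1 (2 * X)
    have hM0 : (1 : ℤ) < M := by exact_mod_cast M1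
    have hML' : 2 * (M : ℤ) ≤ L := by exact_mod_cast hML
    have h3 : (2 * (M : ℤ)) ^ (2 * X) * 2 < (2 * (L : ℤ) - 1) ^ i := by
      calc (2 * (M : ℤ)) ^ (2 * X) * 2 < (2 * (M : ℤ)) ^ (2 * X) * (2 * M) := by
            apply mul_lt_mul_of_pos_left _ (by positivity)
            linarith
        _ = (2 * (M : ℤ)) ^ (2 * X + 1) := by ring
        _ ≤ (2 * (L : ℤ) - 1) ^ (2 * X + 1) := pow_le_pow_left₀ (by linarith) (by linarith) _
        _ ≤ _ := pow_le_pow_right₀ (by linarith) (by omega)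
    have hCJ : 2 * |s.C| < |s.J| := by
      rw [hj, hC, abs_of_nonneg (by positivity)]; linarith
    have h4 : |2 * (s.C - s.q * s.J)| < |s.J| := sq_lt_sq.1 (by linarith)
    have h5 : |2 * (s.q * s.J)| ≤ |2 * s.C| + |2 * (s.C - s.q * s.J)| := by
      have := abs_sub (2 * s.C) (2 * (s.C - s.q * s.J))
      rwa [show 2 * s.C - 2 * (s.C - s.q * s.J) = 2 * (s.q * s.J) by ring] at this
    rw [abs_mul 2 s.C, abs_mul 2 (s.q * _), abs_mul s.q, abs_two] at h5
    have h6 : 1 ≤ |s.q| := Int.one_le_abs hq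
    nlinarith [abs_nonneg s.J]
  rcases abs_choice s.J with h | h
  · rw [h] at hj hmod
    have h1 : ((L : ℤ) - 1) ∣ j - (X + 1) := by
      have := Int.modEq_iff_dvd.1 hmod
      have := this.add hd
      rwa [show (j : ℤ) - s.J + (s.J - (X + 1)) = j - (X + 1) by ring] at this
    have h2 := Int.eq_zero_of_abs_lt_dvd h1 (by rw [abs_lt]; omega)
    rw [hj]
    congr 2
    omega
  · rw [h] at hj hmod
    have h1 : ((L : ℤ) - 1) ∣ j + (X + 1) := by
      have := Int.modEq_iff_dvd.1 hmod
      have := this.sub hd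
      rwa [show (j : ℤ) - -s.J - (s.J - (X + 1)) = j + (X + 1) by ring] at this
    have := Int.le_of_dvd (by omega) h1
    omega

/-- The test for `W = 2 ^ B`. -/
theorem W_eq {X M V : ℕ} (hM : s.M = M) (hV : s.V = V) (M1 : 1 < M)
    (hC : s.C = Pell.yn M1 (2 * X + 1)) (hVX : (V : ℤ) ^ X ≤ 5 * s.q) (hW : s.W ≠ 0)
    (hVW : 64 * s.W ^ 2 ≤ s.V) (hV64 : 64 ≤ s.V) (hu : 16 * s.q ^ 2 ≤ s.u)
    (hMu : s.u * s.V ≤ s.M) (hST : s.S ∣ s.T) : s.W = 2 ^ (2 * X + 1) := by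
  set t : ℤ := 2 ^ (2 * X + 1) with ht
  have hpell := yn_two_pow_dvd M1 (2 * X + 1)
  rw [← hC, ← hM] at hpell
  -- Eliminating `C` from the congruences for `W` and for `t` leaves `W = t` or `W * t = -1`.
  have h1 : s.S ∣ 2 * ((t - s.W) * (s.W * t + 1)) := by
    have := (hST.mul_left t).sub (hpell.mul_left s.W)
    have e : 2 * ((t - s.W) * (s.W * t + 1)) = t * s.T -
        s.W * (3 * t * s.C - 2 * (t ^ 2 - 1)) := by unfold T; ring
    rwa [e]
  have hodd : IsCoprime s.S 2 := ⟨1, 3 - 2 * s.M, by unfold S; ring⟩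
  have h2 := hodd.dvd_of_dvd_mul_left h1
  have hW1 : 1 ≤ |s.W| := Int.one_le_abs hW
  have ht2 : 2 ≤ t := by
    rw [ht, pow_succ]
    have : (1 : ℤ) ≤ 2 ^ (2 * X) := one_le_pow₀ (by norm_num)
    linarith
  have hlt : |(t - s.W) * (s.W * t + 1)| < s.S := by
    have e1 : |t - s.W| ≤ 2 * t * |s.W| := by
      have := abs_sub t s.W
      rw [abs_of_pos (show 0 < t by linarith)] at this
      nlinarith
    have e2 : |s.W * t + 1| ≤ 2 * t * |s.W| := by
      have := abs_add_le (s.W * t) 1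
      rw [abs_mul, abs_one, abs_of_pos (show 0 < t by linarith)] at this
      nlinarith
    have e3 : |(t - s.W) * (s.W * t + 1)| ≤ 4 * t ^ 2 * s.W ^ 2 := by
      rw [abs_mul, ← sq_abs s.W]
      calc _ ≤ (2 * t * |s.W|) * (2 * t * |s.W|) :=
            mul_le_mul e1 e2 (abs_nonneg _) (by positivity)
        _ = _ := by ring
    have hV64' : (64 : ℤ) ≤ V := by rw [← hV]; exact hV64
    have hVX2 : ((V : ℤ) ^ X) ^ 2 ≤ 25 * s.q ^ 2 := by
      have := pow_le_pow_left₀ (by positivity) hVX 2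
      linarith
    have ht4 : t ^ 2 ≤ 4 * ((V : ℤ) ^ X) ^ 2 := by
      have : t = 2 * 4 ^ X := by rw [ht, pow_succ, pow_mul]; norm_num [mul_comm]
      rw [this, mul_pow]
      have : (4 : ℤ) ^ X ≤ V ^ X := pow_le_pow_left₀ (by norm_num) (by linarith) _
      have := pow_le_pow_left₀ (by positivity) this 2
      linarith
    have hMM : 16 * s.q ^ 2 * (64 * s.W ^ 2) ≤ s.M :=
      le_trans (mul_le_mul hu hVW (by positivity) (by linarith [sq_nonneg s.q])) hMu
    have e4 : t ^ 2 * s.W ^ 2 ≤ 100 * s.q ^ 2 * s.W ^ 2 :=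
      mul_le_mul_of_nonneg_right (by linarith) (sq_nonneg _)
    have hM1 : 2 ≤ s.M := by rw [hM]; exact_mod_cast M1
    unfold S
    nlinarith [mul_nonneg (sq_nonneg s.q) (sq_nonneg s.W)]
  have h3 := Int.eq_zero_of_abs_lt_dvd h2 hlt
  rcases mul_eq_zero.1 h3 with h | h
  · linarith
  · exfalso
    have := Int.isUnit_iff.1 (IsUnit.of_mul_eq_one (-t) (show s.W * -t = 1 by linarith))
    rcases this with h' | h' <;> rw [h'] at h <;> linarith

set_option maxHeartbeats 2000000 in
/-- The system of conditions forces `β ^ 2` to be a power of two and `Y` to divide the central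
binomial coefficient. -/
theorem sound (hX : 1 ≤ s.X) (hY : 2 ≤ s.Y) (hG : 1 ≤ s.G) (sD : IsSquare s.D) (sF : IsSquare s.F)
    (sI : IsSquare s.I) (sA : IsSquare s.A) (hR : 0 < s.R) (hST : s.S ∣ s.T) :
    (∃ m : ℕ, s.β ^ 2 = 2 ^ m) ∧
      ∃ X : ℕ, s.X = X ∧ s.Y ∣ (((2 * X).choose X : ℕ) : ℤ) := by
  obtain ⟨hβ, hw, hx, hl, -, hCJ⟩ := s.of_R_pos hR
  have hq : s.q ≠ 0 := mul_ne_zero hl (by omega)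
  have hW : s.W ≠ 0 := mul_ne_zero (pow_ne_zero _ hβ) hw
  obtain ⟨z1, z2, z3, z4, z5, z6, z7⟩ := s.sizes hX hY hG hq hW
  obtain ⟨X, hsX⟩ := Int.eq_ofNat_of_zero_le (show 0 ≤ s.X by omega)
  obtain ⟨V, hV⟩ := Int.eq_ofNat_of_zero_le (show 0 ≤ s.V by omega)
  have huM : s.u ≤ s.M := by nlinarith
  obtain ⟨M, hM⟩ := Int.eq_ofNat_of_zero_le (show 0 ≤ s.M by omega)
  obtain ⟨L, hL⟩ := Int.eq_ofNat_of_zero_le (show 0 ≤ s.L by omega)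
  have M1 : 1 < M := by omega
  have L1 : 1 < L := by omega
  have hC := s.eq_yn_C hsX (by omega) hM M1 (by omega) hx sD sF sI
  have hJ := s.eq_yn_J hsX (by omega) M1 hL L1 (by omega) (by omega) hC hq hCJ sA
  have hJ0 : 0 < s.J := by
    rw [hJ]
    have h := le_yn_succ L1 X
    have : (0 : ℤ) < (2 * (L : ℤ) - 1) ^ X := pow_pos (by omega) _
    linarith
  have hC0 : 0 < s.C := by
    rw [hC]
    have h := le_yn_succ M1 (2 * X)
    have : (0 : ℤ) < (2 * (M : ℤ) - 1) ^ (2 * X) := pow_pos (by omega) _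
    linarith
  have hlt : |2 * (s.C - s.q * s.J)| < s.J := by
    have := sq_lt_sq.1 (show (2 * (s.C - s.q * s.J)) ^ 2 < s.J ^ 2 by linarith)
    rwa [abs_of_pos hJ0] at this
  rw [abs_lt] at hlt
  have hq1 : 1 ≤ s.q := by
    by_contra hcon
    have : s.q ≤ -1 := by omega
    nlinarith
  obtain ⟨J0, t0, -, hcl⟩ := s.approx hsX hV (by omega) (by omega) hG hq1 hM hL M1 L1 rfl rfl
  have eC : ((Pell.yn M1 (2 * X + 1) : ℕ) : ℝ) = s.C := by rw [hC]; norm_cast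
  have eJ : ((Pell.yn L1 (X + 1) : ℕ) : ℝ) = s.J := by rw [hJ]; norm_cast
  rw [eC, eJ] at hcl
  rw [eJ] at J0
  set t : ℝ := (s.C : ℝ) / s.J with htd
  have ht1 : |t - s.q| < 1 / 2 := by
    have l1 : (-(s.J : ℝ)) < 2 * (s.C - s.q * s.J) := by exact_mod_cast hlt.1
    have l2 : (2 : ℝ) * (s.C - s.q * s.J) < s.J := by exact_mod_cast hlt.2
    have e : t - s.q = (s.C - s.q * s.J) / s.J := by rw [htd]; field_simp
    rw [e, abs_lt, lt_div_iff₀ J0, div_lt_iff₀ J0]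
    constructor <;> linarith
  have hq1' : (1 : ℝ) ≤ s.q := by exact_mod_cast hq1
  obtain ⟨hρ5, htρ⟩ := hcl (by have := (abs_lt.1 ht1).2; linarith)
  have hV1 : (1 : ℝ) ≤ V := by have : 1 ≤ V := by omega
                               exact_mod_cast this
  have hVρ : (V : ℝ) ^ X ≤ ((V : ℝ) + 1) ^ (2 * X) / (V : ℝ) ^ X := by
    rw [le_div_iff₀ (by positivity), ← pow_add, ← two_mul]
    exact pow_le_pow_left₀ (by linarith) (by linarith) _
  -- `V ^ X` is bounded in terms of `q`, hence `2 ^ (2 X + 1)` is small compared to `M`; this is what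
  -- the test for `W` requires.
  have hVX : (V : ℤ) ^ X ≤ 5 * s.q := by
    have := hVρ.trans hρ5
    exact_mod_cast this
  have hWt := s.W_eq hM hV M1 hC hVX hW z1 z2 z3 z6 hST
  refine ⟨?_, X, hsX, ?_⟩
  · have hdvd : s.β.natAbs ^ 2 ∣ 2 ^ (2 * X + 1) := by
      have h1 : s.β ^ 2 ∣ 2 ^ (2 * X + 1) := ⟨s.w, by rw [← hWt]; rfl⟩
      have := Int.natAbs_dvd_natAbs.2 h1
      rwa [Int.natAbs_pow, Int.natAbs_pow] at this
    obtain ⟨m, -, hm⟩ := (Nat.dvd_prime_pow Nat.prime_two).1 hdvd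
    refine ⟨m, ?_⟩
    rw [← Int.natAbs_sq]
    exact_mod_cast hm
  · obtain ⟨Q, r, hr0, hr1, hr⟩ := binomial_quotient X (V := V) (by omega)
    rw [hr] at htρ
    have hG' : (1 : ℝ) ≤ s.G := by exact_mod_cast hG
    have h516 : 5 / (16 * (s.G : ℝ)) ≤ 5 / 16 := by
      apply div_le_div_of_nonneg_left <;> linarith
    have hr8 : r ≤ 1 / 8 := by
      refine hr1.trans ?_
      rw [div_le_div_iff₀ (by linarith) (by norm_num)]
      have h1 : (64 : ℤ) * (2 ^ (2 * X + 1)) ^ 2 ≤ V := by rw [← hV, ← hWt]; exact z1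
      have h2 : (4 : ℤ) ^ X * 8 ≤ 1 * V := by
        have e : (2 : ℤ) ^ (2 * X + 1) = 2 * 4 ^ X := by rw [pow_succ, pow_mul]; norm_num [mul_comm]
        rw [e] at h1
        have : (1 : ℤ) ≤ 4 ^ X := one_le_pow₀ (by norm_num)
        nlinarith
      exact_mod_cast h2
    -- `1 / 2 + 5 / 16 + 1 / 8 < 1`
    have hqn : s.q = V * Q + (2 * X).choose X := by
      have habs : |((s.q - (V * Q + (2 * X).choose X) : ℤ) : ℝ)| < 1 := by
        push_cast
        rw [abs_le] at htρ
        rw [abs_lt] at ht1 ⊢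
        constructor <;> linarith [htρ.1, htρ.2, ht1.1, ht1.2]
      have : |s.q - (V * Q + (2 * X).choose X : ℤ)| < 1 := by exact_mod_cast habs
      have := Int.abs_lt_one_iff.1 this
      linarith
    have h1 : s.Y ∣ s.q := ⟨s.l, by unfold q; ring⟩
    have h2 : s.Y ∣ (V : ℤ) := by
      rw [← hV]
      exact ⟨16 * s.G ^ 2 * s.W ^ 2 * s.Y, by unfold PellData.V; ring⟩
    have h3 := h1.sub (h2.mul_right Q)
    rwa [hqn, add_sub_cancel_left] at h3

end PellData

/-! ### Completeness of the Pell conditions -/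

/-- A square factor can be cancelled from a square. -/
theorem isSquare_of_mul_sq {a b : ℤ} (hb : b ≠ 0) (h : IsSquare (a * b ^ 2)) : IsSquare a := by
  obtain ⟨r, hr⟩ := h
  rw [← pow_two] at hr
  have h1 : b ^ 2 ∣ r ^ 2 := ⟨a, by rw [← hr]; ring⟩
  obtain ⟨c, rfl⟩ := (Int.pow_dvd_pow_iff two_ne_zero).1 h1
  refine ⟨c, ?_⟩
  have : b ^ 2 * a = b ^ 2 * (c * c) := by linear_combination hr
  exact mul_left_cancel₀ (pow_ne_zero 2 hb) this

namespace PellData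

variable (s : PellData)

/-- Completeness of the characterization of `y_B(M)` by three squares. -/
theorem exists_FI {X M : ℕ} (hsX : s.X = X) (hM : s.M = M) (M1 : 1 < M)
    (hC : s.C = Pell.yn M1 (2 * X + 1)) :
    ∃ x y : ℤ, x ≠ 0 ∧ IsSquare ({ s with x := x, y := y } : PellData).F ∧
      IsSquare ({ s with x := x, y := y } : PellData).I := by
  have hM2 : 2 ≤ s.M := by rw [hM]; exact_mod_cast M1
  have hB : s.B = ((2 * X + 1 : ℕ) : ℤ) := by unfold B; rw [hsX]; push_cast; ring
  have hC0 : 0 < s.C := by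
    rw [hC]
    have h := le_yn_succ M1 (2 * X)
    have : (0 : ℤ) < (2 * (M : ℤ) - 1) ^ (2 * X) := pow_pos (by omega) _
    linarith
  have hD := s.one_le_D
  have hCD : s.C ^ 2 * s.D ≠ 0 := by positivity
  have hns : ¬ IsSquare ((s.M ^ 2 - 1) * (s.C ^ 2 * s.D) ^ 2) := by
    intro hsq
    obtain ⟨r, hr⟩ := isSquare_of_mul_sq hCD hsq
    rw [← abs_mul_abs_self] at hr
    have := abs_nonneg r
    rcases lt_or_ge |r| s.M with h | h
    · have : |r| ≤ s.M - 1 := by omega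
      nlinarith
    · nlinarith
  obtain ⟨f, x, hfx, hx0⟩ := Pell.exists_of_not_isSquare
    (mul_pos (by nlinarith) (by positivity)) hns
  set E : ℤ := s.C ^ 2 * s.D * x with hE
  set F : ℤ := (s.M ^ 2 - 1) * E ^ 2 + 1 with hF
  set G : ℤ := 1 + (s.M - 1) * (F - 1) ^ 2 with hG
  have hE0 : E ≠ 0 := mul_ne_zero hCD hx0
  have hF2 : 2 ≤ F := by
    have : 0 < E ^ 2 := by positivity
    have := mul_pos (show 0 < s.M ^ 2 - 1 by nlinarith) this
    rw [hF]; linarith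
  have hG2 : 2 ≤ G := by
    have : 0 < (F - 1) ^ 2 := pow_pos (by linarith) _
    rw [hG]; nlinarith
  obtain ⟨a, ha⟩ := Int.eq_ofNat_of_zero_le (show 0 ≤ G by linarith)
  obtain ⟨c, hc⟩ := Int.eq_ofNat_of_zero_le (show 0 ≤ F by linarith)
  have a1 : 1 < a := by omega
  set H : ℤ := ((Pell.yn a1 (2 * X + 1) : ℕ) : ℤ) with hH
  have hCF : s.C ∣ F - 1 := ⟨(s.M ^ 2 - 1) * E * (s.C * s.D * x), by rw [hF, hE]; ring⟩
  have hCG : s.C ∣ G - 1 := (hCF.mul_left ((s.M - 1) * (F - 1))).trans ⟨1, by rw [hG]; ring⟩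
  have hCH : s.C ∣ H - s.B := by
    have := (Int.modEq_iff_dvd.1 (yn_modEq_int a1 (2 * X + 1)).symm)
    rw [← ha, ← hB] at this
    exact hCG.trans this
  have hFH : F ∣ H - s.C := by
    have hmod : a ≡ M [MOD c] := by
      rw [← Int.natCast_modEq_iff, ← ha, ← hc, ← hM]
      exact (Int.modEq_iff_dvd.2 ⟨(s.M - 1) * (F - 2), by rw [hG]; ring⟩ : s.M ≡ G [ZMOD F]).symm
    have := (Pell.xy_modEq_of_modEq a1 M1 hmod (2 * X + 1)).2
    rw [← Int.natCast_modEq_iff, ← hc, ← hC] at this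
    exact Int.modEq_iff_dvd.1 this.symm
  have hcop : IsCoprime s.C F := by
    obtain ⟨e, he⟩ := hCF
    exact ⟨-e, 1, by linear_combination he⟩
  have hCFH : s.C * F ∣ H - s.C - (s.B - s.C) * F := by
    refine hcop.mul_dvd ?_ ?_
    · obtain ⟨e, he⟩ := hCF
      obtain ⟨e', he'⟩ := hCH
      exact ⟨e' + F - 1 - s.B * e, by linear_combination he' - s.B * he⟩
    · exact hFH.sub (Dvd.intro_left _ rfl)
  obtain ⟨y, hy⟩ := hCFH
  refine ⟨x, y, hx0, ⟨f, ?_⟩, ⟨Pell.xn a1 (2 * X + 1), ?_⟩⟩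
  · change F = f * f
    rw [hF, hE]; linear_combination -hfx
  · change (G ^ 2 - 1) * (s.C + (s.B - s.C) * F + y * s.C * F) ^ 2 + 1 = _
    rw [show s.C + (s.B - s.C) * F + y * s.C * F = H by linear_combination -hy, ha, hH,
      pell_eq_int a1, pow_two]

/-- If the parameters are admissible and `q` is the coefficient sum from the binomial expansion,
`R` is positive. -/
theorem R_pos {X V M L Q : ℕ} (hX : 1 ≤ X) (hY : 2 ≤ s.Y) (hG : 1 ≤ s.G) (hg : |2 * s.g| < s.G)
    (hsX : s.X = X) (hV : s.V = V) (hM : s.M = M) (hL : s.L = L) (M1 : 1 < M) (L1 : 1 < L)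
    (hW : s.W = 2 ^ (2 * X + 1)) (hβ : s.β ≠ 0) (hw : s.w ≠ 0) (hx : s.x ≠ 0) (hl : s.l ≠ 0)
    (hC : s.C = Pell.yn M1 (2 * X + 1)) (hJ : s.J = Pell.yn L1 (X + 1)) {r : ℝ} (hr0 : 0 ≤ r)
    (hr1 : r ≤ 4 ^ X / V) (hV1 : 1 ≤ V)
    (hr : ((V : ℝ) + 1) ^ (2 * X) / (V : ℝ) ^ X = V * Q + (2 * X).choose X + r)
    (hq : s.q = V * Q + (2 * X).choose X) : 0 < s.R := by
  have hG' : (1 : ℝ) ≤ s.G := by exact_mod_cast hG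
  have hch : 1 ≤ (2 * X).choose X := Nat.choose_pos (by omega)
  have hq1 : 1 ≤ s.q := by
    rw [hq]
    have : (0 : ℤ) ≤ V * Q := by positivity
    omega
  have hr8 : r ≤ 1 / (8 * s.G) := by
    refine hr1.trans ?_
    rw [div_le_div_iff₀ (by exact_mod_cast hV1) (by linarith)]
    have h2 : (4 : ℤ) ^ X * (8 * s.G) ≤ 1 * V := by
      rw [← hV]
      unfold PellData.V
      rw [hW]
      have e : (2 : ℤ) ^ (2 * X + 1) = 2 * 4 ^ X := by rw [pow_succ, pow_mul]; norm_num [mul_comm]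
      rw [e]
      have h1 : (1 : ℤ) ≤ 4 ^ X := one_le_pow₀ (by norm_num)
      set t : ℤ := 4 ^ X
      have h3 : 1 ≤ s.G * s.Y := by nlinarith
      have h4 : 1 ≤ s.Y ^ 2 := by nlinarith
      have h5 : s.G ≤ s.G ^ 2 * s.Y ^ 2 := by nlinarith
      have h6 : t ≤ t ^ 2 := by nlinarith
      have h7 : t * s.G ≤ t ^ 2 * (s.G ^ 2 * s.Y ^ 2) :=
        mul_le_mul h6 h5 (by linarith) (by positivity)
      have h8 : 0 ≤ t ^ 2 * (s.G ^ 2 * s.Y ^ 2) := by positivity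
      linarith
    exact_mod_cast h2
  obtain ⟨J0, t0, hhalf, hcl⟩ := s.approx hsX hV (by omega) (by omega) hG hq1 hM hL M1 L1 rfl rfl
  have eC : ((Pell.yn M1 (2 * X + 1) : ℕ) : ℝ) = s.C := by rw [hC]; norm_cast
  have eJ : ((Pell.yn L1 (X + 1) : ℕ) : ℝ) = s.J := by rw [hJ]; norm_cast
  rw [eC, eJ, hr] at hcl hhalf
  rw [eJ] at J0
  have hqr : (s.q : ℝ) = V * Q + (2 * X).choose X := by rw [hq]; push_cast; ring
  rw [← hqr] at hcl hhalf
  have hq1' : (1 : ℝ) ≤ s.q := by exact_mod_cast hq1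
  have hr1' : 1 / (8 * (s.G : ℝ)) ≤ 1 := by
    rw [div_le_one (by linarith)]; linarith
  obtain ⟨-, htρ⟩ := hcl (by linarith)
  have hlt : |2 * s.G * (s.C - s.q * s.J)| < s.J := by
    have h1 : |(s.C : ℝ) / s.J - s.q| < 1 / (2 * s.G) := by
      have e1 : 5 / (16 * (s.G : ℝ)) + 1 / (8 * s.G) = 7 / (16 * s.G) := by field_simp; norm_num
      have e2 : 7 / (16 * (s.G : ℝ)) < 1 / (2 * s.G) := by
        rw [div_lt_div_iff₀ (by linarith) (by linarith)]; linarith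
      rw [abs_le] at htρ
      rw [abs_lt]
      constructor <;> linarith [htρ.1, htρ.2]
    have h2 : (s.C : ℝ) / s.J - s.q = (s.C - s.q * s.J) / s.J := by field_simp
    rw [h2, abs_div, abs_of_pos J0, div_lt_div_iff₀ J0 (by linarith)] at h1
    have h3 : |2 * (s.G : ℝ) * (s.C - s.q * s.J)| < s.J := by
      rw [abs_mul, abs_of_pos (show (0 : ℝ) < 2 * s.G by linarith)]
      linarith
    exact_mod_cast h3
  have hJ0 : 0 < s.J := by exact_mod_cast J0
  have h1 := sq_lt_sq.2 (hlt.trans_le (le_abs_self _))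
  have h2 := sq_lt_sq.2 (hg.trans_le (le_abs_self _))
  have h3 : s.J ^ 2 ≤ s.J ^ 2 * (s.G ^ 2 - 4 * s.g ^ 2) :=
    le_mul_of_one_le_right (sq_nonneg _) (by linarith)
  unfold R
  refine mul_pos (by positivity) ?_
  linarith

/-- Completeness: the system of conditions is solvable when `β` is a power of two and `Y` divides
the central binomial coefficient. -/
theorem complete {G g Y β : ℤ} {X m : ℕ} (hX : 1 ≤ X) (hY : 2 ≤ Y) (hG : 1 ≤ G)
    (hg : |2 * g| < G) (hβ : β = 2 ^ m) (hmX : 2 * m ≤ 2 * X + 1)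
    (hdvd : Y ∣ (((2 * X).choose X : ℕ) : ℤ)) :
    ∃ h k l w x y : ℤ, ∃ s : PellData, s = ⟨G, g, X, Y, β, h, k, l, w, x, y⟩ ∧
      IsSquare s.D ∧ IsSquare s.F ∧ IsSquare s.I ∧ IsSquare s.A ∧ 0 < s.R ∧ s.S ∣ s.T := by
  have hβ0 : β ≠ 0 := by rw [hβ]; positivity
  set w : ℤ := 2 ^ (2 * X + 1 - 2 * m) with hw
  have hw0 : w ≠ 0 := by rw [hw]; positivity
  have hW : β ^ 2 * w = 2 ^ (2 * X + 1) := by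
    rw [hβ, hw, ← pow_mul, ← pow_add]
    congr 1
    omega
  set Vz : ℤ := 16 * (G * Y * (β ^ 2 * w)) ^ 2 with hVz
  have hVz1 : 0 < Vz := by
    have : G * Y * (β ^ 2 * w) ≠ 0 :=
      mul_ne_zero (mul_ne_zero (by omega) (by omega)) (mul_ne_zero (pow_ne_zero _ hβ0) hw0)
    rw [hVz]; positivity
  obtain ⟨V, hV⟩ := Int.eq_ofNat_of_zero_le hVz1.le
  have hV1 : 1 ≤ V := by omega
  obtain ⟨Q, r, hr0, hr1, hr⟩ := binomial_quotient X hV1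
  have hYV : Y ∣ (V : ℤ) := by
    rw [← hV]
    exact ⟨16 * G ^ 2 * (β ^ 2 * w) ^ 2 * Y, by rw [hVz]; ring⟩
  obtain ⟨l, hl⟩ := (hYV.mul_right Q).add hdvd
  have hch : 1 ≤ (2 * X).choose X := Nat.choose_pos (by omega)
  have hlq : (0 : ℤ) < V * Q + (2 * X).choose X := by positivity
  have hl0 : l ≠ 0 := by
    rintro rfl
    rw [hl] at hlq; simp at hlq
  -- `M` and `L` depend on `l` and `w` only; `h` and `k` are chosen next, `x` and `y` last.
  set s0 : PellData := ⟨G, g, X, Y, β, 0, 0, l, w, 0, 0⟩ with hs0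
  have hsq0 : s0.q ≠ 0 := mul_ne_zero hl0 (by change Y ≠ 0; omega)
  have hsW0 : s0.W ≠ 0 := mul_ne_zero (pow_ne_zero _ hβ0) hw0
  obtain ⟨z1, z2, z3, z4, z5, z6, z7⟩ :=
    s0.sizes (by change (1 : ℤ) ≤ X; omega) hY hG hsq0 hsW0
  have huM : s0.u ≤ s0.M := by nlinarith
  obtain ⟨M, hM⟩ := Int.eq_ofNat_of_zero_le (show 0 ≤ s0.M by omega)
  obtain ⟨L, hL⟩ := Int.eq_ofNat_of_zero_le (show 0 ≤ s0.L by omega)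
  have M1 : 1 < M := by omega
  have L1 : 1 < L := by omega
  obtain ⟨h, hh⟩ := Int.modEq_iff_dvd.1 (yn_modEq_int M1 (2 * X + 1)).symm
  obtain ⟨k, hk⟩ := Int.modEq_iff_dvd.1 (yn_modEq_int L1 (X + 1)).symm
  set s1 : PellData := ⟨G, g, X, Y, β, h, k, l, w, 0, 0⟩ with hs1
  have hM' : s1.M = M := hM
  have hL' : s1.L = L := hL
  have hC : s1.C = Pell.yn M1 (2 * X + 1) := by
    have : s1.C = 2 * (X : ℤ) + 1 + (s1.M - 1) * h := rfl
    rw [this, hM']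
    push_cast at hh
    linear_combination -hh
  have hJ : s1.J = Pell.yn L1 (X + 1) := by
    have : s1.J = (X : ℤ) + 1 + k * (s1.L - 1) := rfl
    rw [this, hL']
    push_cast at hk
    linear_combination -hk
  obtain ⟨x, y, hx0, hsF, hsI⟩ := s1.exists_FI rfl hM' M1 hC
  refine ⟨h, k, l, w, x, y, _, rfl, ?_, hsF, hsI, ?_, ?_, ?_⟩
  · change IsSquare s1.D
    refine ⟨Pell.xn M1 (2 * X + 1), ?_⟩
    unfold D
    rw [hC, hM', pell_eq_int M1, pow_two]
  · change IsSquare s1.A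
    refine ⟨Pell.xn L1 (X + 1), ?_⟩
    unfold A
    rw [hJ, hL', pell_eq_int L1, pow_two]
  · exact R_pos _ hX hY hG hg rfl hV hM' hL' M1 L1 hW hβ0 hw0 hx0 hl0 hC hJ hr0 hr1 hV1 hr
      (by rw [hl]; exact mul_comm l Y)
  · change s1.S ∣ s1.T
    have := yn_two_pow_dvd M1 (2 * X + 1)
    rw [← hC, ← hM', ← hW] at this
    exact this

end PellData

/-! ### One equation for all conditions -/

theorem isSquare_left_of_coprime {a b : ℤ} (ha : 0 ≤ a) (h : IsCoprime a b)
    (hs : IsSquare (a * b)) : IsSquare a := by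
  obtain ⟨c, hc⟩ := hs
  obtain ⟨d, hd | hd⟩ := Int.sq_of_isCoprime h (hc.trans (pow_two c).symm)
  · exact ⟨d, hd.trans (pow_two d)⟩
  · have : d ^ 2 = 0 := le_antisymm (by linarith) (sq_nonneg d)
    exact ⟨0, by rw [hd, this]; norm_num⟩

/-- Every nonzero integer is an odd number times a number congruent to `1` modulo `3`. -/
theorem exists_odd_mul {y : ℤ} (hy : y ≠ 0) : ∃ p q : ℤ, y = (2 * p + 1) * (3 * q + 1) := by
  obtain ⟨k, o, ⟨j, rfl⟩, hj⟩ := Nat.exists_eq_two_pow_mul_odd (Int.natAbs_ne_zero.2 hy)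
  obtain ⟨o, hyo, ho⟩ : ∃ o : ℤ, y = 2 ^ k * o ∧ ∃ p, o = 2 * p + 1 := by
    rcases Int.natAbs_eq y with h | h <;> rw [hj] at h
    · exact ⟨2 * j + 1, by rw [h]; push_cast; ring, j, rfl⟩
    · exact ⟨-(2 * j + 1), by rw [h]; push_cast; ring, -j - 1, by ring⟩
  have hk : ∃ q : ℤ, (2 : ℤ) ^ k = 3 * q + 1 ∨ (2 : ℤ) ^ k = -(3 * q + 1) := by
    clear hj hyo
    induction k with
    | zero => exact ⟨0, by norm_num⟩
    | succ k ih =>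
      obtain ⟨q, hq | hq⟩ := ih
      · exact ⟨-2 * q - 1, Or.inr (by rw [pow_succ, hq]; ring)⟩
      · exact ⟨-2 * q - 1, Or.inl (by rw [pow_succ, hq]; ring)⟩
  obtain ⟨p, rfl⟩ := ho
  obtain ⟨q, hq | hq⟩ := hk
  · exact ⟨p, q, by rw [hyo, hq]; ring⟩
  · exact ⟨-p - 1, q, by rw [hyo, hq]; ring⟩

/-- The product of the four numbers `x ± S W √A ± S √A₁` vanishes for some `x ≡ T` modulo `S` only
if `A` and `A₁` are squares and `S` divides `T`. -/
theorem combine_sound {A1 A S T n : ℤ} (hS : S ≠ 0) (hA1 : A1 ≠ 0)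
    (h : ((S * n + T) ^ 2 + S ^ 2 * (1 + A1 ^ 2) ^ 2 * A - S ^ 2 * A1) ^ 2 -
      4 * S ^ 2 * (1 + A1 ^ 2) ^ 2 * A * (S * n + T) ^ 2 = 0) :
    IsSquare A1 ∧ IsSquare A ∧ S ∣ T := by
  have hW : 1 + A1 ^ 2 ≠ 0 := by positivity
  -- For `x = 0` the number `A1` would be divisible by the larger `(1 + A1 ^ 2) ^ 2`.
  have hx0 : S * n + T ≠ 0 := by
    intro hx
    rw [hx] at h
    have h1 : S ^ 2 * ((1 + A1 ^ 2) ^ 2 * A - A1) = 0 := by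
      refine pow_eq_zero_iff two_ne_zero |>.1 ?_
      linear_combination h
    have h2 : A1 = (1 + A1 ^ 2) ^ 2 * A := by
      rcases mul_eq_zero.1 h1 with h' | h'
      · exact absurd h' (pow_ne_zero _ hS)
      · linarith
    have h3 : (1 + A1 ^ 2) ^ 2 ≤ |A1| :=
      Int.le_of_dvd (abs_pos.2 hA1) ((dvd_abs _ _).2 ⟨A, h2⟩)
    have h4 := abs_nonneg A1
    rw [← sq_abs A1] at h3
    nlinarith [sq_nonneg (|A1| ^ 2), sq_nonneg (|A1| - 1)]
  set x := S * n + T with hx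
  have sA : IsSquare A := by
    refine isSquare_of_mul_sq (b := 2 * S * (1 + A1 ^ 2) * x) (by positivity) ?_
    exact ⟨x ^ 2 + S ^ 2 * (1 + A1 ^ 2) ^ 2 * A - S ^ 2 * A1, by linear_combination -h⟩
  have sA1 : IsSquare A1 := by
    refine isSquare_of_mul_sq (b := 2 * S * x) (by positivity) ?_
    exact ⟨x ^ 2 + S ^ 2 * A1 - S ^ 2 * (1 + A1 ^ 2) ^ 2 * A, by linear_combination -h⟩
  refine ⟨sA1, sA, ?_⟩
  obtain ⟨a, ha⟩ := sA
  obtain ⟨b, hb⟩ := sA1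
  generalize 1 + A1 ^ 2 = W at *
  -- With `√A = a` and `√A₁ = b` the expression factors, and each factor is `≡ x ≡ T` modulo `S`.
  have h1 : (x + S * (W * a + b)) * (x - S * (W * a + b)) *
      ((x + S * (W * a - b)) * (x - S * (W * a - b))) = 0 := by
    rw [ha, hb] at h
    linear_combination h
  have h2 : ∃ c, x = S * c := by
    rcases mul_eq_zero.1 h1 with h' | h' <;> rcases mul_eq_zero.1 h' with h'' | h''
    · exact ⟨-(W * a + b), by linear_combination h''⟩
    · exact ⟨W * a + b, by linear_combination h''⟩
    · exact ⟨-(W * a - b), by linear_combination h''⟩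
    · exact ⟨W * a - b, by linear_combination h''⟩
  obtain ⟨c, hc⟩ := h2
  exact ⟨c - n, by linear_combination hc - hx⟩

namespace PellData

variable (s : PellData) (n p q' : ℤ)

/-- A nonzero multiple of `D F I`. -/
def mult : ℤ := s.D * s.F * s.I * ((2 * p + 1) * (3 * q' + 1))

/-- A product of four coprime numbers that are squares exactly when `D`, `F`, `I` are squares and
`R` is positive (for suitable `p`, `q'`). -/
def A1 : ℤ := s.D * s.F * s.I * ((4 * s.R - 2) * s.mult p q' ^ 2 + 1)

/-- The single equation expressing all conditions on the unknowns. -/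
def eqn : ℤ :=
  ((s.S * n + s.T) ^ 2 + s.S ^ 2 * (1 + s.A1 p q' ^ 2) ^ 2 * s.A - s.S ^ 2 * s.A1 p q') ^ 2 -
    4 * s.S ^ 2 * (1 + s.A1 p q' ^ 2) ^ 2 * s.A * (s.S * n + s.T) ^ 2

/-- `F` and `I` are congruent to `1` modulo `D`, and `I` is congruent to `D` modulo `F`. -/
theorem coprime_DFI : IsCoprime s.D s.F ∧ IsCoprime s.D s.I ∧ IsCoprime s.F s.I := by
  have h1 : s.F = 1 + s.D * ((s.M ^ 2 - 1) * s.C ^ 4 * s.D * s.x ^ 2) := by unfold F E; ring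
  have hDF : IsCoprime s.D s.F := by
    rw [h1]; exact isCoprime_one_right.add_mul_left_right _
  have h2 : s.I = 1 + s.D * ((s.M - 1) * (s.F - 1) * ((s.M ^ 2 - 1) * s.C ^ 4 * s.D * s.x ^ 2)
      * (s.Gg + 1) * s.H ^ 2) := by
    have : s.F - 1 = s.D * ((s.M ^ 2 - 1) * s.C ^ 4 * s.D * s.x ^ 2) := by rw [h1]; ring
    have hG : s.Gg - 1 = (s.M - 1) * (s.F - 1) * (s.F - 1) := by unfold Gg; ring
    unfold I
    linear_combination (s.Gg + 1) * s.H ^ 2 * hG +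
      (s.M - 1) * (s.F - 1) * (s.Gg + 1) * s.H ^ 2 * this
  have hDI : IsCoprime s.D s.I := by
    rw [h2]; exact isCoprime_one_right.add_mul_left_right _
  refine ⟨hDF, hDI, ?_⟩
  have hG : s.Gg = s.M + s.F * ((s.M - 1) * (s.F - 2)) := by unfold Gg; ring
  have hH : s.H = s.C + s.F * (s.B - s.C + s.y * s.C) := by unfold H; ring
  have h3 : s.I = s.D + s.F * (((s.M - 1) * (s.F - 2)) * (s.Gg + s.M) * s.H ^ 2 +
      (s.M ^ 2 - 1) * ((s.B - s.C + s.y * s.C) * (s.H + s.C))) := by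
    unfold I D
    linear_combination (s.Gg + s.M) * s.H ^ 2 * hG + (s.M ^ 2 - 1) * (s.H + s.C) * hH
  rw [h3]
  exact hDF.symm.add_mul_left_right _

theorem S_ne_zero : s.S ≠ 0 := by unfold S; omega

/-- The single equation implies all conditions: coprimality splits the square `A1` into squares, and the
last factor `(4 R - 2) v ^ 2 + 1` of `A1` can only be positive if `R` is. -/
theorem eqn_sound (h : s.eqn n p q' = 0) :
    IsSquare s.D ∧ IsSquare s.F ∧ IsSquare s.I ∧ IsSquare s.A ∧ 0 < s.R ∧ s.S ∣ s.T := by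
  have hD := s.one_le_D
  have hF := s.one_le_F
  have hI := s.one_le_I
  set Q : ℤ := (4 * s.R - 2) * s.mult p q' ^ 2 + 1 with hQ
  have hQ0 : Q ≠ 0 := by
    have : Q = 2 * ((2 * s.R - 1) * s.mult p q' ^ 2) + 1 := by rw [hQ]; ring
    omega
  have hP : 0 < s.D * s.F * s.I := by positivity
  have hA1 : s.A1 p q' = s.D * s.F * s.I * Q := rfl
  obtain ⟨sA1, sA, hST⟩ := combine_sound s.S_ne_zero (by rw [hA1]; exact mul_ne_zero hP.ne' hQ0) h
  rw [hA1] at sA1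
  have hQp : 0 < Q := by
    refine lt_of_le_of_ne ?_ hQ0.symm
    exact nonneg_of_mul_nonneg_right sA1.nonneg hP
  have hcQ : IsCoprime (s.D * s.F * s.I) Q := by
    have : Q = 1 + s.D * s.F * s.I * ((4 * s.R - 2) * s.mult p q' *
        ((2 * p + 1) * (3 * q' + 1))) := by rw [hQ]; unfold mult; ring
    rw [this]; exact isCoprime_one_right.add_mul_left_right _
  obtain ⟨c1, c2, c3⟩ := s.coprime_DFI
  have sDFI := isSquare_left_of_coprime hP.le hcQ sA1
  have cI : IsCoprime (s.D * s.F) s.I := c2.mul_left c3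
  have sDF := isSquare_left_of_coprime (by positivity) cI sDFI
  have sI := isSquare_left_of_coprime (by positivity) cI.symm (by rwa [mul_comm])
  have sD := isSquare_left_of_coprime (by positivity) c1 sDF
  have sF := isSquare_left_of_coprime (by positivity) c1.symm (by rwa [mul_comm])
  refine ⟨sD, sF, sI, sA, ?_, hST⟩
  by_contra hR
  have hv : s.mult p q' ≠ 0 :=
    mul_ne_zero hP.ne' (mul_ne_zero (by omega) (by omega))
  have : 0 < s.mult p q' ^ 2 := by positivity
  nlinarith

/-- The conditions make the single equation solvable. As `4 R - 2 ≡ 2` modulo `4` is not a square, a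
Pell equation provides the multiplier that turns the last factor of `A1` into a square. -/
theorem eqn_complete (sD : IsSquare s.D) (sF : IsSquare s.F) (sI : IsSquare s.I)
    (sA : IsSquare s.A) (hR : 0 < s.R) (hST : s.S ∣ s.T) : ∃ n p q', s.eqn n p q' = 0 := by
  have hD := s.one_le_D
  have hF := s.one_le_F
  have hI := s.one_le_I
  have hP : s.D * s.F * s.I ≠ 0 := by positivity
  have hns : ¬ IsSquare ((4 * s.R - 2) * (s.D * s.F * s.I) ^ 2) := by
    intro hsq
    obtain ⟨r, hr⟩ := isSquare_of_mul_sq hP hsq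
    rcases Int.even_or_odd' r with ⟨c, rfl | rfl⟩
    · have : 4 * s.R - 2 = 4 * (c * c) := by rw [hr]; ring
      omega
    · have : 4 * s.R - 2 = 4 * (c * c + c) + 1 := by rw [hr]; ring
      omega
  obtain ⟨z, y, hzy, hy⟩ := Pell.exists_of_not_isSquare
    (mul_pos (by linarith) (by positivity)) hns
  obtain ⟨p, q', hpq⟩ := exists_odd_mul hy
  have sA1 : IsSquare (s.A1 p q') := by
    refine ((sD.mul sF).mul sI).mul ⟨z, ?_⟩
    unfold mult
    rw [← hpq]
    linear_combination -hzy
  obtain ⟨a, ha⟩ := sA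
  obtain ⟨b, hb⟩ := sA1
  obtain ⟨t, ht⟩ := hST
  refine ⟨b + (1 + s.A1 p q' ^ 2) * a - t, p, q', ?_⟩
  unfold eqn
  rw [ht, ha]
  generalize 1 + s.A1 p q' ^ 2 = W
  rw [hb]
  ring

end PellData

/-! ### The reduction -/

section AssemblyPart

/-- The unknown that is to become a power of two. It is even, and exceeds the parameter `a` when
`f` is nonnegative. -/
def cβ (a f : ℤ) : ℤ := 1 + (2 * a + 1) * (2 * f + 1)

/-- The data of the Pell equations attached to a polynomial `P`, a value `a` of the parameter and
integer unknowns. -/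
def params {ν : ℕ} (κ δ : ℕ) (P : MvPolynomial (Fin (ν + 1)) ℤ) (a f g h k l w x y : ℤ) :
    PellData where
  G := cG ν δ (2 * cH κ δ (cβ a f ^ 2))
  g := g
  X := cX κ δ P a (cβ a f ^ 2) g
  Y := cY κ ν δ (cβ a f ^ 2)
  β := cβ a f
  h := h
  k := k
  l := l
  w := w
  x := x
  y := y

/-- Since `cβ a f` is even, and `|2 f + 1| ≥ 1`, it is either zero or large. -/
theorem lt_cβ_sq {a f : ℤ} (ha : 0 ≤ a) (h : cβ a f ≠ 0) :
    4 ≤ cβ a f ^ 2 ∧ a < cβ a f ^ 2 := by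
  have e : cβ a f = 2 * (a + f + 2 * a * f + 1) := by unfold cβ; ring
  have h4 : 4 ≤ cβ a f ^ 2 := by
    have h0 : 0 < (a + f + 2 * a * f + 1) ^ 2 := by
      have : a + f + 2 * a * f + 1 ≠ 0 := by
        intro h'; rw [h'] at e; exact h (by rw [e]; norm_num)
      positivity
    rw [e]
    linarith
  refine ⟨h4, ?_⟩
  rcases le_or_gt 0 f with hf | hf
  · have : 2 * a + 2 ≤ cβ a f := by unfold cβ; nlinarith
    nlinarith
  · have : cβ a f ≤ -(2 * a) := by unfold cβ; nlinarith
    rcases eq_or_lt_of_le ha with h0 | h0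
    · omega
    · nlinarith

variable {ν δ κ : ℕ} {P : MvPolynomial (Fin (ν + 1)) ℤ}

/-- A solution of the single equation yields a zero of `P` in natural numbers, the digits of `G + g`. -/
theorem eqn_params_sound (hP : P.totalDegree ≤ δ) (hδ : 1 ≤ δ)
    (hκ : (ν + 3 : ℤ) ^ δ * ∑ m ∈ P.support, |dCoeff δ P m| < 2 ^ κ) {a : ℕ}
    {f g h k l w x y n p q' : ℤ} (he : (params κ δ P a f g h k l w x y).eqn n p q' = 0) :
    ∃ z : Fin ν → ℕ, eval (Fin.cases (a : ℤ) (fun i => (z i : ℤ)) : Fin (ν + 1) → ℤ) P = 0 := by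
  obtain ⟨sD, sF, sI, sA, hR, hST⟩ := PellData.eqn_sound _ _ _ _ he
  obtain ⟨hβ, -, -, -, hg, -⟩ := PellData.of_R_pos _ hR
  set b : ℤ := cβ a f ^ 2 with hb
  obtain ⟨hb4, hab⟩ := lt_cβ_sq (Int.natCast_nonneg a) hβ
  have hG0 : 0 < cG ν δ (2 * cH κ δ b) := by
    unfold cG cH
    have : 0 < b := by linarith
    positivity
  have hg' : |2 * g| < cG ν δ (2 * cH κ δ b) := by
    have h1 : (2 * g) ^ 2 < cG ν δ (2 * cH κ δ b) ^ 2 := by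
      have : 4 * g ^ 2 < cG ν δ (2 * cH κ δ b) ^ 2 := hg
      linarith
    have := sq_lt_sq.1 h1
    rwa [abs_of_pos hG0] at this
  obtain ⟨hX, hG, hY⟩ := crude_bounds hδ hκ hb4 (Int.natCast_nonneg a) hab hg'
  obtain ⟨⟨m, hm⟩, X, hX', hdvd⟩ := PellData.sound _
    (show 1 ≤ cX κ δ P a b g by linarith) hY hG sD sF sI sA hR hST
  have hbm : b = 2 ^ m := hm
  have hm2 : 2 ≤ m := by
    by_contra hcon
    have : m ≤ 1 := by omega
    have := pow_le_pow_right₀ (show (1 : ℤ) ≤ 2 by norm_num) this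
    linarith
  obtain ⟨v, -, -, hv⟩ := (cY_dvd_iff hP hδ hκ hm2 hbm hab hg' (X := X) hX'.symm).1 hdvd
  exact ⟨fun i => v i, hv⟩

/-- By Euler's theorem `2 a + 1` divides `2 ^ m - 1` whenever `m` is a multiple of `φ (2 a + 1)`. -/
theorem exists_cβ_eq_two_pow (a K : ℕ) : ∃ (m : ℕ) (f : ℤ), K < m ∧ cβ a f = 2 ^ m ∧ a < 2 ^ m := by
  have hcop : Nat.Coprime 2 (2 * a + 1) := by simp
  have h1 := (Nat.ModEq.pow_totient hcop).pow (K + 1)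
  rw [one_pow, ← pow_mul] at h1
  set m := Nat.totient (2 * a + 1) * (K + 1) with hm
  have hφ : 0 < Nat.totient (2 * a + 1) := Nat.totient_pos.2 (by omega)
  have hKm : K < m := by rw [hm]; nlinarith
  have h2 : ((2 * a + 1 : ℕ) : ℤ) ∣ 2 ^ m - 1 := by
    have := ((Int.natCast_modEq_iff).2 h1.symm).dvd
    push_cast at this ⊢
    exact this
  obtain ⟨c, hc⟩ := h2
  obtain ⟨i, hi⟩ : ∃ i, m = i + 1 := ⟨m - 1, by omega⟩
  have hpow : (2 : ℤ) ^ m = 2 * 2 ^ i := by rw [hi, pow_succ]; ring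
  have h2i : (1 : ℤ) ≤ 2 ^ i := one_le_pow₀ (by norm_num)
  push_cast at hc
  -- an odd number is a product of two odd numbers only
  rcases Int.even_or_odd' c with ⟨f, rfl | rfl⟩
  · exfalso
    have : 2 * 2 ^ i - 1 = 2 * (((2 : ℤ) * a + 1) * f) := by rw [← hpow, hc]; ring
    omega
  · refine ⟨m, f, hKm, ?_, ?_⟩
    · unfold cβ; linarith
    · have h3 : (2 * (a : ℤ) + 1) ∣ 2 ^ m - 1 := ⟨_, hc⟩
      have h4 := Int.le_of_dvd (by linarith) h3
      have h5 : (a : ℤ) < 2 ^ m := by linarith [Int.natCast_nonneg a]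
      exact_mod_cast h5

/-- A zero of `P` in natural numbers yields a solution of the single equation. -/
theorem eqn_params_complete (hP : P.totalDegree ≤ δ) (hδ : 1 ≤ δ)
    (hκ : (ν + 3 : ℤ) ^ δ * ∑ m ∈ P.support, |dCoeff δ P m| < 2 ^ κ) {a : ℕ} {z : Fin ν → ℕ}
    (hz : eval (Fin.cases (a : ℤ) (fun i => (z i : ℤ)) : Fin (ν + 1) → ℤ) P = 0) :
    ∃ f g h k l w x y n p q', (params κ δ P a f g h k l w x y).eqn n p q' = 0 := by
  obtain ⟨m, f, hm, hβ, ham⟩ := exists_cβ_eq_two_pow a (∑ i, z i)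
  set b : ℤ := cβ a f ^ 2 with hb
  have hbm : b = 2 ^ (2 * m) := by rw [hb, hβ, ← pow_mul, mul_comm]
  have hmb : (2 : ℤ) ^ m ≤ b := by
    rw [hbm]; exact pow_le_pow_right₀ (by norm_num) (by omega)
  have hab : (a : ℤ) < b := lt_of_lt_of_le (by exact_mod_cast ham) hmb
  have hb4 : 4 ≤ b := (lt_cβ_sq (Int.natCast_nonneg a) (by rw [hβ]; positivity)).1
  have hzb : ∀ i, (z i : ℤ) < b := by
    intro i
    refine lt_of_lt_of_le ?_ hmb
    have h1 : z i ≤ ∑ i, z i := Finset.single_le_sum (fun _ _ => Nat.zero_le _) (Finset.mem_univ i)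
    have h2 : m < 2 ^ m := Nat.lt_two_pow_self
    have h3 : z i < 2 ^ m := by omega
    exact_mod_cast h3
  obtain ⟨g, hg, hdvd⟩ := exists_code (κ := κ) hP hδ hκ (by omega) hbm hab hzb hz
  obtain ⟨hX, hG, hY⟩ := crude_bounds hδ hκ hb4 (Int.natCast_nonneg a) hab hg
  obtain ⟨X, hX'⟩ := Int.eq_ofNat_of_zero_le (show 0 ≤ cX κ δ P a b g by linarith)
  have hmX : 2 * m ≤ X := by
    have h1 : 2 * m < 2 ^ (2 * m) := Nat.lt_two_pow_self
    have h2 : ((2 ^ (2 * m) : ℕ) : ℤ) ≤ X := by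
      rw [← hX', Nat.cast_pow, Nat.cast_ofNat, ← hbm]; exact hX
    have h3 : 2 ^ (2 * m) ≤ X := by exact_mod_cast h2
    omega
  obtain ⟨h, k, l, w, x, y, s, hs, sD, sF, sI, sA, hR, hST⟩ :=
    PellData.complete (by omega) hY hG hg hβ (by omega) (hdvd X hX'.symm)
  obtain ⟨n, p, q', he⟩ := s.eqn_complete sD sF sI sA hR hST
  refine ⟨f, g, h, k, l, w, x, y, n, p, q', ?_⟩
  have : params κ δ P a f g h k l w x y = s := by
    rw [hs, ← hX']; rfl
  rw [this, he]

end AssemblyPart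

/-! ### Degrees -/

section DegreePart

/-- `F` is a polynomial function of twelve variables, of total degree at most `d`. -/
def PolyFn (d : ℕ) (F : (Fin 12 → ℤ) → ℤ) : Prop :=
  ∃ p : MvPolynomial (Fin 12) ℤ, p.totalDegree ≤ d ∧ ∀ z, eval z p = F z

namespace PolyFn

variable {d e m n : ℕ} {F G : (Fin 12 → ℤ) → ℤ}

theorem mono (hF : PolyFn d F) (h : d ≤ e) : PolyFn e F := by
  obtain ⟨p, hp, hF⟩ := hF
  exact ⟨p, hp.trans h, hF⟩

theorem const (c : ℤ) : PolyFn d fun _ => c :=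
  ⟨C c, (totalDegree_C c).le.trans (Nat.zero_le d), by simp⟩

theorem var (i : Fin 12) : PolyFn 1 fun z => z i :=
  ⟨MvPolynomial.X i, (totalDegree_X i).le, by simp⟩

theorem add (hF : PolyFn m F) (hG : PolyFn n G) (hm : m ≤ d) (hn : n ≤ d) :
    PolyFn d fun z => F z + G z := by
  obtain ⟨p, hp, hF⟩ := hF
  obtain ⟨q, hq, hG⟩ := hG
  exact ⟨p + q, (totalDegree_add p q).trans (max_le (hp.trans hm) (hq.trans hn)), fun z => by
    rw [map_add, hF, hG]⟩

theorem sub (hF : PolyFn m F) (hG : PolyFn n G) (hm : m ≤ d) (hn : n ≤ d) :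
    PolyFn d fun z => F z - G z := by
  obtain ⟨p, hp, hF⟩ := hF
  obtain ⟨q, hq, hG⟩ := hG
  exact ⟨p - q, (totalDegree_sub p q).trans (max_le (hp.trans hm) (hq.trans hn)), fun z => by
    rw [map_sub, hF, hG]⟩

theorem mul (hF : PolyFn m F) (hG : PolyFn n G) (hd : m + n ≤ d) :
    PolyFn d fun z => F z * G z := by
  obtain ⟨p, hp, hF⟩ := hF
  obtain ⟨q, hq, hG⟩ := hG
  exact ⟨p * q, ((totalDegree_mul p q).trans (add_le_add hp hq)).trans hd, fun z => by
    rw [map_mul, hF, hG]⟩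

theorem pow (hF : PolyFn m F) (k : ℕ) (hd : k * m ≤ d) : PolyFn d fun z => F z ^ k := by
  obtain ⟨p, hp, hF⟩ := hF
  exact ⟨p ^ k, ((totalDegree_pow p k).trans (Nat.mul_le_mul_left k hp)).trans hd, fun z => by
    rw [map_pow, hF]⟩

theorem sum {ι : Type*} (s : Finset ι) {f : ι → (Fin 12 → ℤ) → ℤ} (h : ∀ i ∈ s, PolyFn d (f i)) :
    PolyFn d fun z => ∑ i ∈ s, f i z := by
  classical
  induction s using Finset.induction_on with
  | empty => simpa using const 0
  | insert i s hi ih =>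
    simp only [Finset.sum_insert hi]
    exact add (h i (Finset.mem_insert_self i s))
      (ih fun j hj => h j (Finset.mem_insert_of_mem hj)) le_rfl le_rfl

/-- The degree of the single equation, when its data are polynomials of degree at most `d`. -/
theorem eqn {s : (Fin 12 → ℤ) → PellData} {n p q : (Fin 12 → ℤ) → ℤ} (hd : 1 ≤ d)
    (hG : PolyFn d fun z => (s z).G) (hg : PolyFn d fun z => (s z).g)
    (hX : PolyFn d fun z => (s z).X) (hY : PolyFn d fun z => (s z).Y)
    (hβ : PolyFn d fun z => (s z).β) (hh : PolyFn d fun z => (s z).h)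
    (hk : PolyFn d fun z => (s z).k) (hl : PolyFn d fun z => (s z).l)
    (hw : PolyFn d fun z => (s z).w) (hx : PolyFn d fun z => (s z).x)
    (hy : PolyFn d fun z => (s z).y) (hn : PolyFn d n) (hp : PolyFn d p) (hq : PolyFn d q) :
    PolyFn (50000 * d) fun z => (s z).eqn (n z) (p z) (q z) := by
  have one {e : ℕ} : PolyFn e fun _ => 1 := const 1
  have two {e : ℕ} : PolyFn e fun _ => 2 := const 2
  have h_q : PolyFn (2 * d) fun z => (s z).q := hl.mul hY (by omega)
  have h_B : PolyFn d fun z => (s z).B := (two (e := 0) |>.mul hX (by omega)).add one le_rfl le_rfl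
  have h_u : PolyFn (8 * d) fun z => (s z).u :=
    (one (e := 0)).add (((((const (d := 0) 4).mul hG (d := d) (by omega)).mul hX
      (d := 2 * d) (by omega)).mul h_q (d := 4 * d) (by omega)).pow 2 le_rfl)
      (by omega) (by omega)
  have h_W : PolyFn (3 * d) fun z => (s z).W := (hβ.pow 2 le_rfl).mul hw (by omega)
  have h_V : PolyFn (10 * d) fun z => (s z).V :=
    (const (d := 0) 16).mul (((hG.mul hY (d := 2 * d) (by omega)).mul h_W
      (d := 5 * d) (by omega)).pow 2 le_rfl) (by omega)
  have h_M : PolyFn (18 * d) fun z => (s z).M :=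
    h_u.mul (h_V.add (one (e := 0)) le_rfl (by omega)) (by omega)
  have h_L : PolyFn (26 * d) fun z => (s z).L :=
    ((two (e := 0)).mul (h_u.pow 2 le_rfl) le_rfl).mul h_V (by omega)
  have h_C : PolyFn (19 * d) fun z => (s z).C :=
    h_B.add ((h_M.sub (one (e := 0)) le_rfl (by omega)).mul hh le_rfl) (by omega) (by omega)
  have h_M2 : PolyFn (36 * d) fun z => (s z).M ^ 2 - 1 :=
    (h_M.pow 2 le_rfl).sub (one (e := 0)) (by omega) (by omega)
  have h_D : PolyFn (74 * d) fun z => (s z).D :=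
    (h_M2.mul (h_C.pow 2 le_rfl) le_rfl).add (one (e := 0)) (by omega) (by omega)
  have h_E : PolyFn (113 * d) fun z => (s z).E :=
    ((h_C.pow 2 le_rfl).mul h_D le_rfl).mul hx (by omega)
  have h_F : PolyFn (262 * d) fun z => (s z).F :=
    (h_M2.mul (h_E.pow 2 le_rfl) le_rfl).add (one (e := 0)) (by omega) (by omega)
  have h_Gg : PolyFn (542 * d) fun z => (s z).Gg :=
    (one (e := 0)).add ((h_M.sub (one (e := 0)) le_rfl (by omega)).mul
      ((h_F.sub (one (e := 0)) le_rfl (by omega)).pow 2 le_rfl) le_rfl) (by omega) (by omega)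
  have h_H : PolyFn (282 * d) fun z => (s z).H :=
    (h_C.add ((h_B.sub h_C (d := 19 * d) (by omega) le_rfl).mul h_F le_rfl) (d := 281 * d)
      (by omega) (by omega)).add
      ((hy.mul h_C le_rfl).mul h_F le_rfl) (by omega) (by omega)
  have h_I : PolyFn (1648 * d) fun z => (s z).I :=
    (((h_Gg.pow 2 le_rfl).sub (one (e := 0)) le_rfl (by omega)).mul (h_H.pow 2 le_rfl)
      le_rfl).add (one (e := 0)) (by omega) (by omega)
  have h_J : PolyFn (27 * d) fun z => (s z).J :=
    (hX.add (one (e := 0)) le_rfl (by omega)).add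
      (hk.mul (h_L.sub (one (e := 0)) le_rfl (by omega)) le_rfl) (by omega) (by omega)
  have h_A : PolyFn (106 * d) fun z => (s z).A :=
    (((h_L.pow 2 le_rfl).sub (one (e := 0)) le_rfl (by omega)).mul (h_J.pow 2 le_rfl)
      le_rfl).add (one (e := 0)) (by omega) (by omega)
  have h_R : PolyFn (68 * d) fun z => (s z).R :=
    ((((hβ.mul hw le_rfl).mul hx le_rfl).mul hl le_rfl).pow 2 le_rfl).mul
      (((h_J.pow 2 le_rfl).mul ((hG.pow 2 le_rfl).sub
        ((const (d := 0) 4).mul (hg.pow 2 le_rfl) le_rfl) (d := 2 * d) (by omega) (by omega))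
        le_rfl).sub
        (((const (d := 0) 4).mul (hG.pow 2 le_rfl) le_rfl).mul
          ((h_C.sub (h_q.mul h_J le_rfl) (d := 29 * d) (by omega) (by omega)).pow 2 le_rfl)
          le_rfl) (d := 60 * d) (by omega) (by omega)) (by omega)
  have h_S : PolyFn (18 * d) fun z => (s z).S :=
    ((const (d := 0) 4).mul h_M le_rfl).sub (const (d := 0) 5) (by omega) (by omega)
  have h_T : PolyFn (22 * d) fun z => (s z).T :=
    (((const (d := 0) 3).mul h_W le_rfl).mul h_C le_rfl).sub
      ((two (e := 0)).mul ((h_W.pow 2 le_rfl).sub (one (e := 0)) le_rfl (by omega)) le_rfl)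
      (by omega) (by omega)
  have h_DFI : PolyFn (1984 * d) fun z => (s z).D * (s z).F * (s z).I :=
    (h_D.mul h_F le_rfl).mul h_I (by omega)
  have h_mult : PolyFn (1986 * d) fun z => (s z).mult (p z) (q z) :=
    h_DFI.mul ((((two (e := 0)).mul hp le_rfl).add (one (e := 0)) le_rfl (by omega)).mul
      (((const (d := 0) 3).mul hq le_rfl).add (one (e := 0)) le_rfl (by omega)) le_rfl) (by omega)
  have h_A1 : PolyFn (6024 * d) fun z => (s z).A1 (p z) (q z) :=
    h_DFI.mul (((((const (d := 0) 4).mul h_R le_rfl).sub (two (e := 0)) le_rfl (by omega)).mul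
      (h_mult.pow 2 le_rfl) le_rfl).add (one (e := 0)) le_rfl (by omega)) (by omega)
  have h_x : PolyFn (22 * d) fun z => (s z).S * n z + (s z).T :=
    (h_S.mul hn le_rfl).add h_T (by omega) le_rfl
  have h_W2 : PolyFn (24096 * d) fun z => (1 + (s z).A1 (p z) (q z) ^ 2) ^ 2 :=
    ((one (e := 0)).add (h_A1.pow 2 le_rfl) (d := 12048 * d) (by omega) (by omega)).pow 2 (by omega)
  have h_S2 : PolyFn (36 * d) fun z => (s z).S ^ 2 := h_S.pow 2 (by omega)
  have h1 : PolyFn (24238 * d) fun z => (s z).S ^ 2 * (1 + (s z).A1 (p z) (q z) ^ 2) ^ 2 * (s z).A :=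
    (h_S2.mul h_W2 le_rfl).mul h_A (by omega)
  have h2 : PolyFn (24238 * d) fun z =>
      4 * (s z).S ^ 2 * (1 + (s z).A1 (p z) (q z) ^ 2) ^ 2 * (s z).A :=
    ((((const (d := 0) 4).mul h_S2 le_rfl).mul h_W2 le_rfl).mul h_A (by omega))
  exact ((((h_x.pow 2 le_rfl).add h1 (d := 24238 * d) (by omega) le_rfl).sub
    (h_S2.mul h_A1 le_rfl) (d := 24238 * d) le_rfl (by omega)).pow 2 le_rfl).sub
    (h2.mul (h_x.pow 2 le_rfl) le_rfl) (by omega) (by omega)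

end PolyFn

section

variable {ν N κ : ℕ} {P : MvPolynomial (Fin (ν + 1)) ℤ} {a b g : (Fin 12 → ℤ) → ℤ}

/-- The degrees of `G`, `X` and `Y`, when `b` is the square of the quadratic polynomial `β`. -/
theorem polyFn_params (hN : (12 + 1) ^ (ν + 2) = N) (ha : PolyFn 1 a) (hg : PolyFn 1 g)
    (hb : PolyFn 4 b) :
    PolyFn (5000 * N) (fun z => cG ν 12 (2 * cH κ 12 (b z))) ∧
    PolyFn (5000 * N) (fun z => cX κ 12 P (a z) (b z) (g z)) ∧
    PolyFn (5000 * N) (fun z => cY κ ν 12 (b z)) := by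
  have hN1 : 1 ≤ N := hN ▸ Nat.one_le_pow _ _ (by omega)
  have one {e : ℕ} : PolyFn e fun _ => 1 := PolyFn.const 1
  have two {e : ℕ} : PolyFn e fun _ => 2 := PolyFn.const 2
  have h_H : PolyFn 48 fun z => cH κ 12 (b z) :=
    (PolyFn.const (d := 0) (2 ^ κ)).mul (hb.pow 12 le_rfl) (by omega)
  have h_Q : PolyFn 48 fun z => 2 * cH κ 12 (b z) := (two (e := 0)).mul h_H le_rfl
  have h_pow {k : ℕ} (c : ℕ) (hk : k ≤ c * N) :
      PolyFn (48 * c * N) fun z => (2 * cH κ 12 (b z)) ^ k :=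
    h_Q.pow k (by nlinarith)
  have hle {i : ℕ} (hi : i < ν + 1) : (12 + 1) ^ (i + 1) ≤ 1 * N := by
    rw [one_mul, ← hN]; exact Nat.pow_le_pow_right (by omega) (by omega)
  have h_G : PolyFn (48 * N) fun z => cG ν 12 (2 * cH κ 12 (b z)) :=
    (h_pow 1 (hle (Nat.lt_succ_self ν))).mono (by omega)
  have h_comp : PolyFn (52 * N) fun z => cComp ν 12 (b z) (2 * cH κ 12 (b z)) := by
    refine PolyFn.sum _ fun i hi => ?_
    exact (hb.sub (one (e := 0)) le_rfl (by omega)).mul (h_pow 1 (hle (Finset.mem_range.1 hi)))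
      (by omega)
  have h_D : PolyFn (48 * N) fun z => cD 12 P (2 * cH κ 12 (b z)) := by
    refine PolyFn.sum _ fun m _ => ?_
    exact (PolyFn.const (d := 0) _).mul
      (h_pow 1 ((Nat.sub_le _ _).trans (by rw [hN, one_mul]))) (by omega)
  have h_code : PolyFn (49 * N) fun z =>
      1 + a z * (2 * cH κ 12 (b z)) + (cG ν 12 (2 * cH κ 12 (b z)) + g z) :=
    ((one (e := 0)).add (ha.mul h_Q le_rfl) (d := 49) (by omega) le_rfl).add
      (h_G.add hg (d := 49 * N) (by omega) (by omega)) (by omega) le_rfl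
  have h_K : PolyFn (636 * N) fun z => cK κ 12 P (a z) (b z) (g z) := by
    refine ((h_code.pow 12 le_rfl).mul h_D le_rfl).add
      (h_H.mul (PolyFn.sum (d := 96 * N) _ fun j hj => ?_) le_rfl) (by omega) (by omega)
    refine (h_pow 2 ?_).mono (by omega)
    rw [hN] at hj
    exact (Finset.mem_range.1 hj).le
  have h_Z : PolyFn (192 * N) fun z => cZ ν 12 (2 * cH κ 12 (b z)) :=
    (h_pow 4 (by rw [hN]; omega)).mono (by omega)
  have h_T : PolyFn (96 * N) fun z => cT κ ν 12 (b z) :=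
    (h_H.sub (one (e := 0)) le_rfl (by omega)).mul
      ((h_pow 1 (by rw [hN, one_mul]))) (by omega)
  have h_S : PolyFn (49 * N) fun z => cG ν 12 (2 * cH κ 12 (b z)) + g z :=
    h_G.add hg (by omega) (by omega)
  have h_2Z : PolyFn (192 * N) fun z => 2 * cZ ν 12 (2 * cH κ 12 (b z)) :=
    (two (e := 0)).mul h_Z (by omega)
  have h_Z1 : PolyFn (192 * N) fun z => cZ ν 12 (2 * cH κ 12 (b z)) - 1 :=
    h_Z.sub (one (e := 0)) le_rfl (by omega)
  have h_M : PolyFn (192 * N) fun z => cZ ν 12 (2 * cH κ 12 (b z)) - 1 -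
      cComp ν 12 (b z) (2 * cH κ 12 (b z)) := h_Z1.sub h_comp le_rfl (by omega)
  refine ⟨h_G.mono (by omega), ?_, (h_Z.pow 4 (by omega))⟩
  exact (h_S.add h_M (d := 192 * N) (by omega) le_rfl).add (h_2Z.mul
    ((h_Z1.sub h_S (d := 192 * N) le_rfl (by omega)).add (h_2Z.mul
    ((h_Z1.sub h_M (d := 192 * N) le_rfl le_rfl).add (h_2Z.mul
    ((h_K.add h_T (d := 636 * N) le_rfl (by omega)).add (h_2Z.mul
    ((h_Z1.sub h_K (d := 636 * N) (by omega) le_rfl).add (h_2Z.mul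
    (h_Z1.sub h_T (d := 192 * N) le_rfl (by omega))
    le_rfl) (d := 636 * N) le_rfl (by omega)) le_rfl) (d := 828 * N) (by omega) (by omega)) le_rfl)
    (d := 1020 * N) (by omega) (by omega)) le_rfl) (d := 1212 * N) (by omega) (by omega)) le_rfl)
    (by omega) (by omega)

end

/-- The single equation is a polynomial in the parameter and the eleven unknowns. The first argument is
the parameter. -/
theorem polyFn_final {ν N κ : ℕ} (P : MvPolynomial (Fin (ν + 1)) ℤ) (hN : (12 + 1) ^ (ν + 2) = N) :
    PolyFn (50000 * (5000 * N)) fun z => (params κ 12 P (z 0) (z 1) (z 2) (z 3) (z 4) (z 5) (z 6)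
      (z 7) (z 8)).eqn (z 9) (z 10) (z 11) := by
  have hN1 : 1 ≤ N := hN ▸ Nat.one_le_pow _ _ (by omega)
  have hv (i : Fin 12) : PolyFn (5000 * N) fun z => z i := (PolyFn.var i).mono (by omega)
  have hβ : PolyFn 2 fun z => cβ (z 0) (z 1) := by
    have h (i : Fin 12) : PolyFn 1 fun z => 2 * z i + 1 :=
      ((PolyFn.const (d := 0) 2).mul (PolyFn.var i) le_rfl).add (PolyFn.const (d := 0) 1)
        le_rfl (by omega)
    exact (PolyFn.const (d := 0) 1).add ((h 0).mul (h 1) le_rfl) (by omega) le_rfl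
  obtain ⟨h1, h2, h3⟩ := polyFn_params (κ := κ) (P := P) hN (PolyFn.var 0) (PolyFn.var 2)
    (hβ.pow 2 le_rfl)
  exact PolyFn.eqn (by omega) h1 (hv 2) h2 h3 (hβ.mono (by omega)) (hv 3) (hv 4) (hv 5) (hv 6)
    (hv 7) (hv 8) (hv 9) (hv 10) (hv 11)

end DegreePart

/-! ### The pair with eleven integer unknowns -/

/-- Passing from natural-number unknowns, in degree `12`, to eleven integer unknowns. -/
theorem exists_eleven {A : Set ℕ} {ν : ℕ} {P : MvPolynomial (Fin (ν + 1)) ℤ}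
    (hP : P.totalDegree ≤ 12) (hA : IsDiophantineOverNWith A P) :
    ∃ P' : MvPolynomial (Fin (11 + 1)) ℤ,
      P'.totalDegree ≤ 50000 * (5000 * (12 + 1) ^ (ν + 2)) ∧ IsDiophantineOverZWith A P' := by
  -- `κ` depends on `P` only and makes the base large enough for the digits to stay separate.
  obtain ⟨κ, hκ⟩ : ∃ κ : ℕ, (ν + 3 : ℤ) ^ 12 * ∑ m ∈ P.support, |dCoeff 12 P m| < 2 ^ κ :=
    pow_unbounded_of_one_lt _ (by norm_num)
  obtain ⟨P', hdeg, hP'⟩ := polyFn_final (κ := κ) P rfl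
  refine ⟨P', hdeg, fun a => (hA a).trans ⟨?_, ?_⟩⟩
  · rintro ⟨z, hz⟩
    obtain ⟨f, g, h, k, l, w, x, y, n, p, q', he⟩ := eqn_params_complete hP (by norm_num) hκ hz
    refine ⟨![f, g, h, k, l, w, x, y, n, p, q'], ?_⟩
    rw [hP']
    exact he
  · rintro ⟨z, hz⟩
    rw [hP'] at hz
    exact eqn_params_sound (a := a) (f := z 0) (g := z 1) (h := z 2) (k := z 3) (l := z 4)
      (w := z 5) (x := z 6) (y := z 7) (n := z 8) (p := z 9) (q' := z 10) hP (by norm_num) hκ hz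

theorem universal_pair_32_12 (h : UniversalPairN 32 12) :
    UniversalPairZ 11 950817549694171759711025515571236610412597656252821888 := by
  intro A hA
  obtain ⟨P, hP, hAP⟩ := h A hA
  obtain ⟨P', hdeg, hP'⟩ := exists_eleven hP hAP
  -- `50000 * 5000 * 13 ^ 34` has `47` digits.
  exact ⟨P', hdeg.trans (by norm_num), hP'⟩
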